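/- arXiv:2101.04398 — 8 statements merged into one kernel-verified Lean document; each statement's English description precedes it below -/
import Mathlib

section
/- Let G be a torsion-free abelian group and let K be a field. Let g ∈ G be an element of height (0,0,0,…), i.e., for every prime number p the equation p·x = g has no solution x ∈ G, and let a, b ∈ K \ {0}. Then the element a + b·X^g is irreducible in the group algebra K[G]. -/
theorem mats_quot {G : Type*} [AddCommGroup G] (htf : IsAddTorsionFree G)
    (g : G) (hg : ∀ p : ℕ, p.Prime → ∀ x : G, p • x ≠ g) (n : ℕ) (hn : n ≠ 0) (m : ℤ) (x : G)
    (h : n • x = m • g) : ∃ k : ℤ, x = k • g := by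
  have hd : 0 < Int.gcd n m := Int.gcd_pos_of_ne_zero_left _ (by exact_mod_cast hn)
  obtain ⟨n', m', hco, h1, h2⟩ := Int.exists_gcd_one hd
  set d := Int.gcd n m
  have hd' : (d : ℤ) ≠ 0 := by exact_mod_cast hd.ne'
  have h3 : n' • x = m' • g := by
    have : (d : ℤ) • (n' • x - m' • g) = 0 := by
      rw [smul_sub, smul_smul, smul_smul, mul_comm _ n', mul_comm _ m', ← h1, ← h2, ← h]
      simp
    rw [IsAddTorsionFree.zsmul_eq_zero_iff] at this
    exact sub_eq_zero.1 (this.resolve_right hd')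
  have hb := Int.gcd_eq_gcd_ab n' m'
  rw [hco] at hb
  set r := Int.gcdA n' m'
  set s := Int.gcdB n' m'
  have hg' : n' • (r • g + s • x) = g := by
    have : n' • (r • g + s • x) = (n' * r) • g + s • (n' • x) := by module
    rw [this, h3]
    have : (n' * r) • g + s • m' • g = (n' * r + m' * s) • g := by module
    rw [this, ← hb]; simp
  have hu : n'.natAbs = 1 := by
    by_contra hne
    obtain ⟨p, hp, hpd⟩ := Nat.exists_prime_and_dvd hne
    obtain ⟨c, hc⟩ := Int.natCast_dvd.2 hpd
    apply hg p hp (c • (r • g + s • x))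
    rw [← natCast_zsmul, smul_smul, ← hc, hg']
  rcases Int.natAbs_eq_iff.1 hu with h | h
  · exact ⟨m', by rw [← h3, h]; simp⟩
  · exact ⟨-m', by rw [neg_smul, ← h3, h]; simp⟩

theorem mats_two {Q : Type*} [AddCommGroup Q] (htf : IsAddTorsionFree Q) : TwoUniqueSums Q where
  uniqueAdd_of_one_lt_card {A B} hc := by
    classical
    let H : AddSubgroup Q := AddSubgroup.closure (A ∪ B : Finset Q)
    have hAH : ∀ x ∈ A, x ∈ H := fun x hx => AddSubgroup.subset_closure (by simp [hx])
    have hBH : ∀ x ∈ B, x ∈ H := fun x hx => AddSubgroup.subset_closure (by simp [hx])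
    have hfg : AddGroup.FG H := (AddGroup.fg_iff_addSubgroup_fg H).2 ⟨A ∪ B, rfl⟩
    have hfg' : AddMonoid.FG H := AddGroup.fg_iff_addMonoid_fg.1 hfg
    have htfH : IsAddTorsionFree H :=
      Function.Injective.isAddTorsionFree H.subtype H.subtype_injective
    have hT : TwoUniqueSums H := AffineAddMonoid.to_twoUniqueSums
    have hcA : (A.subtype (· ∈ H)).card = A.card := by
      rw [Finset.card_subtype, Finset.filter_true_of_mem hAH]
    have hcB : (B.subtype (· ∈ H)).card = B.card := by
      rw [Finset.card_subtype, Finset.filter_true_of_mem hBH]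
    obtain ⟨⟨p, q⟩, hpq, ⟨p', q'⟩, hpq', hneq, hu, hu'⟩ :=
      hT.uniqueAdd_of_one_lt_card (A := A.subtype (· ∈ H)) (B := B.subtype (· ∈ H))
        (by rw [hcA, hcB]; exact hc)
    simp only [Finset.mem_product, Finset.mem_subtype] at hpq hpq'
    have lift : ∀ p q : H, UniqueAdd (A.subtype (· ∈ H)) (B.subtype (· ∈ H)) p q →
        UniqueAdd A B (p : Q) (q : Q) := by
      intro p q hu x y hx hy hxy
      obtain ⟨h1, h2⟩ := hu (a := ⟨x, hAH x hx⟩) (b := ⟨y, hBH y hy⟩)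
        (by simpa using hx) (by simpa using hy) (Subtype.ext hxy)
      exact ⟨congrArg Subtype.val h1, congrArg Subtype.val h2⟩
    refine ⟨(p, q), by simpa using hpq, (p', q'), by simpa using hpq', ?_, lift _ _ hu,
      lift _ _ hu'⟩
    intro he
    rw [Prod.mk.injEq] at he
    exact hneq (Prod.ext (Subtype.ext he.1) (Subtype.ext he.2))

theorem mats_tfquot {G : Type*} [AddCommGroup G] (htf : IsAddTorsionFree G)
    (g : G) (hg : ∀ p : ℕ, p.Prime → ∀ x : G, p • x ≠ g) :
    IsAddTorsionFree (G ⧸ AddSubgroup.zmultiples g) where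
  nsmul_right_injective n hn := by
    intro x y hxy
    obtain ⟨x, rfl⟩ := QuotientAddGroup.mk_surjective x
    obtain ⟨y, rfl⟩ := QuotientAddGroup.mk_surjective y
    simp only [← QuotientAddGroup.mk_nsmul] at hxy
    rw [QuotientAddGroup.eq, AddSubgroup.mem_zmultiples_iff] at hxy ⊢
    obtain ⟨m, hm⟩ := hxy
    obtain ⟨k, hk⟩ := mats_quot htf g hg n hn m (-x + y) (by rw [hm]; module)
    exact ⟨k, hk.symm⟩

/-- lifting unique sums from the quotient, with extremal fibre coordinates -/
theorem mats_lift {G Q : Type*} [AddCommGroup G] [AddCommGroup Q] [DecidableEq Q]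
    (htf : IsAddTorsionFree G) (g : G) (hg0 : g ≠ 0) (π : G →+ Q) (i : G → ℤ)
    (hi : ∀ u v, π u = π v → u - v = (i u - i v) • g) (e : ℤ) (he : e ≠ 0)
    (A B : Finset G) (p q : Q) (hp : p ∈ A.image π) (hq : q ∈ B.image π)
    (hu : UniqueAdd (A.image π) (B.image π) p q) :
    ∃ u ∈ A, ∃ v ∈ B, π u = p ∧ π v = q ∧ UniqueAdd A B u v ∧
      (∀ u' ∈ A, π u' = p → e * i u ≤ e * i u') ∧ (∀ v' ∈ B, π v' = q → e * i v ≤ e * i v') := by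
  have key : ∀ (A : Finset G) (p : Q), p ∈ A.image π → ∃ u ∈ A, π u = p ∧
      ∀ u' ∈ A, π u' = p → e * i u ≤ e * i u' := by
    intro A p hp
    obtain ⟨w, hw, hwp⟩ := Finset.mem_image.1 hp
    obtain ⟨u, hu, hmin⟩ := Finset.exists_min_image (A.filter (fun w => π w = p))
      (fun w => e * i w) ⟨w, by simp [hw, hwp]⟩
    simp only [Finset.mem_filter] at hu hmin
    exact ⟨u, hu.1, hu.2, fun u' h1 h2 => hmin u' ⟨h1, h2⟩⟩
  obtain ⟨u, huA, hup, humin⟩ := key A p hp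
  obtain ⟨v, hvB, hvq, hvmin⟩ := key B q hq
  refine ⟨u, huA, v, hvB, hup, hvq, ?_, humin, hvmin⟩
  intro u' v' hu' hv' h
  obtain ⟨h1, h2⟩ := hu (Finset.mem_image_of_mem π hu') (Finset.mem_image_of_mem π hv')
    (by rw [← map_add, h, map_add, hup, hvq])
  have e1 := hi u' u (h1.trans hup.symm)
  have e2 := hi v' v (h2.trans hvq.symm)
  have e3 : ((i u' - i u) + (i v' - i v)) • g = 0 := by
    rw [add_smul, ← e1, ← e2]
    have : u' - u + (v' - v) = (u' + v') - (u + v) := by abel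
    rw [this, h, sub_self]
  rw [IsAddTorsionFree.zsmul_eq_zero_iff] at e3
  have e4 := e3.resolve_left hg0
  have m1 := humin u' hu' h1
  have m2 := hvmin v' hv' h2
  have e5 : e * (i u' - i u) + e * (i v' - i v) = 0 := by rw [← mul_add, e4, mul_zero]
  have e6 : e * (i u' - i u) = 0 := by
    rw [mul_sub] at *; linarith [mul_sub e (i v') (i v)]
  have e7 : i u' - i u = 0 := (mul_eq_zero.1 e6).resolve_left he
  have e8 : i v' - i v = 0 := by omega
  rw [e7, zero_smul] at e1
  rw [e8, zero_smul] at e2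
  exact ⟨sub_eq_zero.1 e1, sub_eq_zero.1 e2⟩

theorem mats_main {K : Type*} [Field K] {G : Type*} [AddCommGroup G]
    (htf : IsAddTorsionFree G)
    (g : G) (hg : ∀ p : ℕ, p.Prime → ∀ x : G, p • x ≠ g) (f h : AddMonoidAlgebra K G)
    (hne : f * h ≠ 0) (hs : ∀ w, (f * h).coeff w ≠ 0 → ∃ k : ℤ, w = k • g) :
    ∃ (u v : G) (m n : ℤ), 0 ≤ m ∧ 0 ≤ n ∧ (f * h).coeff (u + v) ≠ 0 ∧
      (f * h).coeff (u + v + (m + n) • g) ≠ 0 ∧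
      (m = 0 → ∃ w c, c ≠ 0 ∧ f = AddMonoidAlgebra.single w c) ∧
      (n = 0 → ∃ w c, c ≠ 0 ∧ h = AddMonoidAlgebra.single w c) := by
  classical
  have hg0 : g ≠ 0 := fun h0 => hg 2 Nat.prime_two 0 (by simp [h0])
  let π := QuotientAddGroup.mk' (AddSubgroup.zmultiples g)
  have htwo := mats_two (mats_tfquot htf g hg)
  have hex : ∀ u : G, ∃ k : ℤ, u - (π u).out = k • g := by
    intro u
    have : (((π u).out : G) : G ⧸ AddSubgroup.zmultiples g) = (u : G ⧸ _) :=
      QuotientAddGroup.out_eq' _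
    rw [QuotientAddGroup.eq, AddSubgroup.mem_zmultiples_iff] at this
    obtain ⟨k, hk⟩ := this
    exact ⟨k, by rw [hk]; abel⟩
  choose i hi' using hex
  have hi : ∀ u v, π u = π v → u - v = (i u - i v) • g := by
    intro u v huv
    rw [sub_smul, ← hi', ← hi', huv]; abel
  have hπ : ∀ w, (f * h).coeff w ≠ 0 → π w = 0 := by
    intro w hw
    obtain ⟨k, rfl⟩ := hs w hw
    exact (QuotientAddGroup.eq_zero_iff _).2 ⟨k, rfl⟩
  set A := f.coeff.support with hA
  set B := h.coeff.support with hB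
  have hf0 : f ≠ 0 := by rintro rfl; simp at hne
  have hh0 : h ≠ 0 := by rintro rfl; simp at hne
  have hAn : A.Nonempty := by
    rw [hA, Finsupp.support_nonempty_iff]; simpa using hf0
  have hBn : B.Nonempty := by
    rw [hB, Finsupp.support_nonempty_iff]; simpa using hh0
  have hcoef : ∀ u ∈ A, ∀ v ∈ B, UniqueAdd A B u v → (f * h).coeff (u + v) ≠ 0 := by
    intro u hu v hv huv
    rw [AddMonoidAlgebra.coeff_mul_add_of_uniqueAdd huv]
    exact mul_ne_zero (Finsupp.mem_support_iff.1 hu) (Finsupp.mem_support_iff.1 hv)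
  have hcard : ¬ 1 < (A.image π).card * (B.image π).card := by
    intro hlt
    obtain ⟨⟨p, q⟩, hpq, ⟨p', q'⟩, hpq', hneq, hu, hu'⟩ :=
      TwoUniqueSums.uniqueAdd_of_one_lt_card hlt
    rw [Finset.mem_product] at hpq hpq'
    have z : ∀ p q, p ∈ A.image π → q ∈ B.image π → UniqueAdd (A.image π) (B.image π) p q →
        p + q = 0 := by
      intro p q hp hq hu
      obtain ⟨u, huA, v, hvB, hup, hvq, huv, -, -⟩ :=
        mats_lift htf g hg0 π i hi 1 one_ne_zero A B p q hp hq hu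
      rw [← hup, ← hvq, ← map_add]
      exact hπ _ (hcoef u huA v hvB huv)
    have z1 := z p q hpq.1 hpq.2 hu
    have z2 := z p' q' hpq'.1 hpq'.2 hu'
    obtain ⟨h1, h2⟩ := hu hpq'.1 hpq'.2 (z2.trans z1.symm)
    exact hneq (by simp only at h1 h2; rw [h1, h2])
  have c1 : 0 < (A.image π).card := (hAn.image π).card_pos
  have c2 : 0 < (B.image π).card := (hBn.image π).card_pos
  have c1' : (A.image π).card = 1 := by nlinarith
  have c2' : (B.image π).card = 1 := by nlinarith
  obtain ⟨p, hp⟩ := Finset.card_eq_one.1 c1'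
  obtain ⟨q, hq⟩ := Finset.card_eq_one.1 c2'
  have hAp : ∀ u ∈ A, π u = p := fun u hu => by
    simpa [hp] using Finset.mem_image_of_mem π hu
  have hBq : ∀ u ∈ B, π u = q := fun u hu => by
    simpa [hq] using Finset.mem_image_of_mem π hu
  have hU : UniqueAdd (A.image π) (B.image π) p q := by
    intro x y hx hy _
    rw [hp] at hx; rw [hq] at hy
    exact ⟨Finset.mem_singleton.1 hx, Finset.mem_singleton.1 hy⟩
  obtain ⟨u0, hu0, v0, hv0, -, -, hU0, hmu0, hmv0⟩ :=
    mats_lift htf g hg0 π i hi 1 one_ne_zero A B p q (by simp [hp]) (by simp [hq]) hU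
  obtain ⟨u1, hu1, v1, hv1, -, -, hU1, hmu1, hmv1⟩ :=
    mats_lift htf g hg0 π i hi (-1) (by norm_num) A B p q (by simp [hp]) (by simp [hq]) hU
  have hsing : ∀ (f : AddMonoidAlgebra K G) (u0 u1 : G) (p : G ⧸ AddSubgroup.zmultiples g),
      u0 ∈ f.coeff.support → (∀ u ∈ f.coeff.support, π u = p) →
      (∀ u' ∈ f.coeff.support, π u' = p → 1 * i u0 ≤ 1 * i u') →
      (∀ u' ∈ f.coeff.support, π u' = p → -1 * i u1 ≤ -1 * i u') → i u1 - i u0 = 0 →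
      ∃ w c, c ≠ 0 ∧ f = AddMonoidAlgebra.single w c := by
    intro f u0 u1 p hu0 hp h0 h1 h2
    refine ⟨u0, f.coeff u0, Finsupp.mem_support_iff.1 hu0, ?_⟩
    have : ∀ u ∈ f.coeff.support, u = u0 := by
      intro u hu
      have a0 := h0 u hu (hp u hu)
      have a1 := h1 u hu (hp u hu)
      have a2 := hi u u0 ((hp u hu).trans (hp u0 hu0).symm)
      have a3 : i u - i u0 = 0 := by omega
      rw [a3, zero_smul] at a2
      exact sub_eq_zero.1 a2
    ext u
    by_cases hu : u = u0
    · subst hu; simp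
    · have : f.coeff u = 0 := by
        by_contra hc
        exact hu (this u (Finsupp.mem_support_iff.2 hc))
      simp [this, Finsupp.single_apply, Ne.symm hu]
  refine ⟨u0, v0, i u1 - i u0, i v1 - i v0, ?_, ?_, hcoef _ hu0 _ hv0 hU0, ?_, ?_, ?_⟩
  · have := hmu0 u1 hu1 (hAp _ hu1); omega
  · have := hmv0 v1 hv1 (hBq _ hv1); omega
  · have : u0 + v0 + ((i u1 - i u0) + (i v1 - i v0)) • g = u1 + v1 := by
      rw [add_smul, ← hi u1 u0 ((hAp _ hu1).trans (hAp _ hu0).symm),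
        ← hi v1 v0 ((hBq _ hv1).trans (hBq _ hv0).symm)]
      abel
    rw [this]
    exact hcoef _ hu1 _ hv1 hU1
  · exact hsing f u0 u1 p hu0 hAp hmu0 hmu1
  · exact hsing h v0 v1 q hv0 hBq hmv0 hmv1

theorem mats_unit {K : Type*} [Field K] {G : Type*} [AddCommGroup G] (w : G) (c : K) (hc : c ≠ 0) :
    IsUnit (AddMonoidAlgebra.single w c : AddMonoidAlgebra K G) := by
  apply IsUnit.of_mul_eq_one (AddMonoidAlgebra.single (-w) c⁻¹)
  rw [AddMonoidAlgebra.single_mul_single, AddMonoidAlgebra.one_def]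
  simp [hc]

/-- **Lemma (Matsuda).** Let `G` be a torsion-free abelian group, `K` a field, `g ∈ G`
an element of height `(0,0,0,…)` (i.e. `p • x = g` has no solution for any prime `p`),
and `a, b ∈ K \ {0}`. Then `a + b·X^g` is irreducible in the group algebra `K[G]`. -/
theorem matsuda_lemma {K : Type*} [Field K] {G : Type*} [AddCommGroup G]
    (htf : IsAddTorsionFree G)
    (g : G) (hg : ∀ p : ℕ, p.Prime → ∀ x : G, p • x ≠ g)
    (a b : K) (ha : a ≠ 0) (hb : b ≠ 0) :
    Irreducible (AddMonoidAlgebra.single (0 : G) a + AddMonoidAlgebra.single g b) := by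
  classical
  have hg0 : g ≠ 0 := fun h0 => hg 2 Nat.prime_two 0 (by simp [h0])
  set F : AddMonoidAlgebra K G := AddMonoidAlgebra.single (0 : G) a + AddMonoidAlgebra.single g b
    with hF
  have hF0 : F.coeff 0 = a := by simp [hF, Finsupp.single_apply, hg0]
  have hFg : F.coeff g = b := by simp [hF, Finsupp.single_apply, hg0.symm]
  have hFs : ∀ w, F.coeff w ≠ 0 → w = 0 ∨ w = g := by
    intro w hw
    by_contra! hc
    exact hw (by simp [hF, Finsupp.single_apply, hc.1.symm, hc.2.symm])
  constructor
  · intro hunit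
    obtain ⟨h, hh⟩ := hunit.exists_right_inv
    have h1s : ∀ w, (F * h).coeff w ≠ 0 → w = 0 := by
      intro w hw
      by_contra hc
      rw [hh, AddMonoidAlgebra.one_def] at hw
      exact hw (by simp [Finsupp.single_apply, Ne.symm hc])
    obtain ⟨u, v, m, n, hm, hn, h1, h2, h3, -⟩ := mats_main htf g hg F h
      (by rw [hh]; exact one_ne_zero) (fun w hw => ⟨0, by rw [h1s w hw]; simp⟩)
    have e1 := h1s _ h1
    have e2 := h1s _ h2
    rw [e1, zero_add, IsAddTorsionFree.zsmul_eq_zero_iff] at e2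
    have e3 := e2.resolve_left hg0
    obtain ⟨w, c, hc, hw⟩ := h3 (by omega)
    have w0 : w = 0 := by
      by_contra hne
      apply ha
      rw [← hF0, hw]; simp [Finsupp.single_apply, hne]
    have wg : w = g := by
      by_contra hne
      apply hb
      rw [← hFg, hw]; simp [Finsupp.single_apply, hne]
    exact hg0 (wg.symm.trans w0)
  · intro f h hfh
    have hne : f * h ≠ 0 := by
      rw [← hfh]; intro h0; apply ha; rw [← hF0, h0]; simp
    obtain ⟨u, v, m, n, hm, hn, h1, h2, h3, h4⟩ := mats_main htf g hg f h hne (by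
      intro w hw
      rw [← hfh] at hw
      rcases hFs w hw with rfl | rfl
      · exact ⟨0, by simp⟩
      · exact ⟨1, by simp⟩)
    rw [← hfh] at h1 h2
    have key : ∀ k : ℤ, k • g = 0 → k = 0 := fun k hk =>
      ((IsAddTorsionFree.zsmul_eq_zero_iff).1 hk).resolve_left hg0
    have hle : m + n ≤ 1 := by
      rcases hFs _ h1 with e1 | e1 <;> rcases hFs _ h2 with e2 | e2 <;> rw [e1] at e2
      · have := key (m + n) (by simpa using e2)
        omega
      · have := key (m + n - 1) (by rw [sub_smul, one_smul, sub_eq_zero]; simpa using e2)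
        omega
      · have := key (m + n + 1) (by rw [add_smul _ 1, one_smul, add_comm]; exact e2)
        omega
      · have := key (m + n) (by simpa using e2)
        omega
    rcases (by omega : m = 0 ∨ n = 0) with h0 | h0
    · obtain ⟨w, c, hc, rfl⟩ := h3 h0
      exact Or.inl (mats_unit w c hc)
    · obtain ⟨w, c, hc, rfl⟩ := h4 h0
      exact Or.inr (mats_unit w c hc)
end

section
/- Let D be a Krull domain with quotient field K, let S be a Krull monoid with quotient group G, and suppose the monoid algebra D[S] is a Krull domain. Then for every nonzero f ∈ K[G] one has f·K[G] ∩ D[S] = f·A_f^{-1}[E_f^{-1}], where A_f is the fractional ideal of D generated by the nonzero coefficients of f and E_f is the fractional ideal of S generated by the exponents of f. -/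
open scoped nonZeroDivisors

noncomputable section

/-- A height-one prime ideal (prime divisor) of a commutative ring:
a nonzero prime ideal that is minimal among nonzero prime ideals. -/
def IsHeightOnePrime {R : Type*} [CommRing R] (P : Ideal R) : Prop :=
  P.IsPrime ∧ P ≠ ⊥ ∧ ∀ Q : Ideal R, Q.IsPrime → Q ≠ ⊥ → Q ≤ P → Q = P

/-- The divisorial (v-)closure `I_v = (R : (R : I))` of a fractional ideal. -/
def divClosure {R : Type*} [CommRing R] [IsDomain R] {K : Type*} [Field K] [Algebra R K]
    [IsFractionRing R K] (I : FractionalIdeal R⁰ K) : FractionalIdeal R⁰ K :=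
  1 / (1 / I)

/-- A Krull domain: a domain that is completely integrally closed and satisfies the
ascending chain condition on (integral) divisorial ideals. -/
def IsKrullDomain (R : Type*) [CommRing R] [IsDomain R] : Prop :=
  (∀ x : FractionRing R,
      (∃ c : R, c ≠ 0 ∧ ∀ n : ℕ,
          IsLocalization.IsInteger R (algebraMap R (FractionRing R) c * x ^ n)) →
      IsLocalization.IsInteger R x) ∧
  (∀ f : ℕ → Ideal R,
      (∀ n, divClosure (f n : FractionalIdeal R⁰ (FractionRing R)) =
        (f n : FractionalIdeal R⁰ (FractionRing R))) →
      (∀ n, f n ≤ f (n + 1)) → ∃ n, ∀ m, n ≤ m → f m = f n)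

/-- Every divisor class of the Krull domain `R` (i.e. every class of v-invertible divisorial
fractional ideals modulo principal ones) contains infinitely many height-one prime ideals. -/
def HasInfinitelyManyPrimeDivisorsInEachClass (R : Type*) [CommRing R] [IsDomain R] : Prop :=
  ∀ I : FractionalIdeal R⁰ (FractionRing R), I ≠ 0 → divClosure I = I →
    divClosure (I * (1 / I)) = 1 →
    {P : Ideal R | IsHeightOnePrime P ∧ ∃ c : FractionRing R, c ≠ 0 ∧
      (P : FractionalIdeal R⁰ (FractionRing R)) =
        divClosure (FractionalIdeal.spanSingleton R⁰ c * I)}.Infinite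

/-- The dual `(S : X) = {g : G | g + X ⊆ S}` of a subset `X` of the quotient group,
with respect to a submonoid `S`. -/
def monDual {G : Type*} [AddCommGroup G] (S : AddSubmonoid G) (X : Set G) : Set G :=
  {g : G | ∀ x ∈ X, g + x ∈ S}

/-- A Krull monoid (given as a submonoid of an abelian group which is its quotient group):
completely integrally closed and ACC on divisorial ideals. -/
def IsKrullMonoid {G : Type*} [AddCommGroup G] (S : AddSubmonoid G) : Prop :=
  (∀ g : G, (∃ c ∈ S, ∀ n : ℕ, c + n • g ∈ S) → g ∈ S) ∧
  (∀ f : ℕ → Set G, (∀ n, f n ⊆ (S : Set G)) → (∀ n, monDual S (monDual S (f n)) = f n) →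
      (∀ n, f n ⊆ f (n + 1)) → ∃ n, ∀ m, n ≤ m → f m = f n)

/-- For subsets `A ⊆ K` and `E ⊆ G`, the set `A[E]` of all finite sums
`Σ pᵢ X^{hᵢ}` with `pᵢ ∈ A` and `hᵢ ∈ E`, inside the monoid algebra `K[G]`. -/
def mixedSpan {K G : Type*} [Semiring K] [AddCommMonoid G] (A : Set K) (E : Set G) :
    Set (AddMonoidAlgebra K G) :=
  {x | ∃ (n : ℕ) (p : Fin n → K) (h : Fin n → G),
    (∀ i, p i ∈ A) ∧ (∀ i, h i ∈ E) ∧ x = ∑ i, AddMonoidAlgebra.single (h i) (p i)}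

theorem aux_uniqueSums {G : Type*} [AddCommGroup G]
    (htf : ∀ g : G, g ≠ 0 → ¬IsOfFinAddOrder g) : UniqueSums G := by
  have : IsAddTorsionFree G := isAddTorsionFree_iff_not_isOfFinAddOrder.mpr htf
  have h : TwoUniqueSums G := TwoUniqueSums.of_injective_addHom
    (DivisibleHull.coeAddMonoidHom G).toAddHom DivisibleHull.coe_injective inferInstance
  infer_instance

theorem aux_integrallyClosed {D : Type*} [CommRing D] [IsDomain D] (hD : IsKrullDomain D) :
    IsIntegrallyClosed D := by
  rw [isIntegrallyClosed_iff (FractionRing D)]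
  intro x hx
  obtain ⟨r, hr, h⟩ := hx.isAlmostIntegral
  obtain ⟨z, hz⟩ := hD.1 x ⟨r, nonZeroDivisors.ne_zero hr, fun n => by
    obtain ⟨w, hw⟩ := h n
    exact ⟨w, by rw [hw, Algebra.smul_def]⟩⟩
  exact ⟨z, hz⟩

theorem aux_coeff_mul_ne {K G : Type*} [Semiring K] [AddCommMonoid G]
    {x y : AddMonoidAlgebra K G} {g : G} (h : (x * y).coeff g ≠ 0) :
    ∃ s t, x.coeff s ≠ 0 ∧ y.coeff t ≠ 0 ∧ s + t = g := by
  classical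
  by_contra hc
  push Not at hc
  apply h
  rw [AddMonoidAlgebra.coeff_mul]
  refine Finset.sum_eq_zero fun s hs => Finset.sum_eq_zero fun t ht => ?_
  beta_reduce
  rw [if_neg (hc s t (Finsupp.mem_support_iff.mp hs) (Finsupp.mem_support_iff.mp ht))]

theorem aux_lift {K G : Type*} [Field K] [AddCommGroup G] (A : ValuationSubring K)
    (z : AddMonoidAlgebra K G) (hz : ∀ g, z.coeff g ∈ A) :
    ∃ Z : AddMonoidAlgebra A G, AddMonoidAlgebra.mapRingHom G A.subtype Z = z := by
  refine ⟨.ofCoeff (Finsupp.onFinset z.coeff.support (fun g => ⟨z.coeff g, hz g⟩) ?_), ?_⟩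
  · intro g hg
    rw [Finsupp.mem_support_iff]
    intro h
    exact hg (Subtype.ext h)
  · ext g
    rw [AddMonoidAlgebra.coeff_mapRingHom]
    rfl

theorem aux_normalize {K G : Type*} [Field K] [AddCommGroup G] (A : ValuationSubring K)
    (f : AddMonoidAlgebra K G) (hf : f ≠ 0) :
    ∃ a : K, a ≠ 0 ∧ (∀ g, A.valuation (f.coeff g) ≤ A.valuation a) ∧
      ∃ F : AddMonoidAlgebra A G, AddMonoidAlgebra.mapRingHom G A.subtype F = a⁻¹ • f ∧
        AddMonoidAlgebra.mapRingHom G (IsLocalRing.residue A) F ≠ 0 := by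
  have hne : f.coeff.support.Nonempty := by
    rw [Finsupp.support_nonempty_iff]
    simpa using hf
  obtain ⟨s, hs, hmax⟩ := Finset.exists_max_image f.coeff.support
    (fun g => A.valuation (f.coeff g)) hne
  have ha : f.coeff s ≠ 0 := Finsupp.mem_support_iff.mp hs
  have hle : ∀ g, A.valuation (f.coeff g) ≤ A.valuation (f.coeff s) := by
    intro g
    by_cases hg : f.coeff g = 0
    · rw [hg, map_zero]; exact zero_le'
    · exact hmax g (Finsupp.mem_support_iff.mpr hg)
  refine ⟨f.coeff s, ha, hle, ?_⟩
  obtain ⟨F, hF⟩ := aux_lift A ((f.coeff s)⁻¹ • f) (fun g => by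
    rw [AddMonoidAlgebra.coeff_smul_apply, smul_eq_mul, ← A.valuation_le_one_iff, map_mul, map_inv₀]
    have h0 : A.valuation (f.coeff s) ≠ 0 := (Valuation.ne_zero_iff _).mpr ha
    calc _ ≤ (A.valuation (f.coeff s))⁻¹ * A.valuation (f.coeff s) := mul_le_mul_right (hle g) _
      _ = 1 := inv_mul_cancel₀ h0)
  refine ⟨F, hF, fun h0 => ?_⟩
  have h1 : F.coeff s = 1 := by
    apply Subtype.ext
    have := congrArg (fun z => z.coeff s) hF
    simp only [AddMonoidAlgebra.coeff_mapRingHom, AddMonoidAlgebra.coeff_smul_apply,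
      smul_eq_mul, inv_mul_cancel₀ ha] at this
    exact this
  have := congrArg (fun z => z.coeff s) h0
  simp [AddMonoidAlgebra.coeff_mapRingHom, h1] at this

theorem aux_gauss {K G : Type*} [Field K] [AddCommGroup G] [UniqueSums G]
    (A : ValuationSubring K) (f y : AddMonoidAlgebra K G)
    (h : ∀ g, (f * y).coeff g ∈ A) (s t : G) : f.coeff s * y.coeff t ∈ A := by
  by_cases hf : f = 0
  · simp [hf, A.zero_mem]
  by_cases hy : y = 0
  · simp [hy, A.zero_mem]
  obtain ⟨a, ha, hla, F, hF, hF0⟩ := aux_normalize A f hf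
  obtain ⟨b, hb, hlb, Y, hY, hY0⟩ := aux_normalize A y hy
  have hne := mul_ne_zero hF0 hY0
  rw [← map_mul] at hne
  obtain ⟨u, hu⟩ : ∃ u, (AddMonoidAlgebra.mapRingHom G (IsLocalRing.residue A) (F * Y)).coeff u
      ≠ 0 := by
    by_contra hc
    push Not at hc
    exact hne (by ext u; simpa using hc u)
  rw [AddMonoidAlgebra.coeff_mapRingHom, IsLocalRing.residue_ne_zero_iff_isUnit] at hu
  have hval := (A.valuation_eq_one_iff _).mp hu
  have e : ((F * Y).coeff u : K) = (a⁻¹ * b⁻¹) * (f * y).coeff u := by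
    have : AddMonoidAlgebra.mapRingHom G A.subtype (F * Y) = (a⁻¹ * b⁻¹) • (f * y) := by
      rw [map_mul, hF, hY, smul_mul_smul_comm]
    have := congrArg (fun z => z.coeff u) this
    simp only [AddMonoidAlgebra.coeff_mapRingHom, AddMonoidAlgebra.coeff_smul_apply,
      smul_eq_mul] at this
    exact this
  have e2 : a * b * ((F * Y).coeff u : K) = (f * y).coeff u := by
    rw [e]; field_simp
  have hab : A.valuation (a * b) ≤ 1 := by
    have h1 := (A.valuation_le_one_iff _).mpr (h u)
    rwa [← e2, map_mul, hval, mul_one] at h1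
  rw [← A.valuation_le_one_iff, map_mul]
  rw [map_mul] at hab
  exact (mul_le_mul' (hla s) (hlb t)).trans hab

theorem aux_coeff {D K G : Type*} [CommRing D] [IsDomain D] [Field K] [Algebra D K]
    [IsFractionRing D K] [IsIntegrallyClosed D] [AddCommGroup G] [UniqueSums G]
    (f y : AddMonoidAlgebra K G)
    (h : ∀ g, (f * y).coeff g ∈ Set.range (algebraMap D K)) (s t : G) :
    f.coeff s * y.coeff t ∈ Set.range (algebraMap D K) := by
  have hm : f.coeff s * y.coeff t ∈ (⨅ V : {V : ValuationSubring K //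
      Set.range (algebraMap D K) ⊆ V.toSubring}, V.1.toSubring) := by
    rw [Subring.mem_iInf]
    rintro ⟨V, hV⟩
    exact aux_gauss V f y (fun g => hV (h g)) s t
  rw [iInf_valuationSubring_superset] at hm
  have hi : IsIntegral (Subring.closure (Set.range (algebraMap D K))) (f.coeff s * y.coeff t) := hm
  have hcl : Subring.closure (Set.range (algebraMap D K)) = (algebraMap D K).range := by
    rw [← RingHom.coe_range, Subring.closure_eq]
  rw [hcl] at hi
  have hi2 : IsIntegral D (f.coeff s * y.coeff t) := by
    obtain ⟨p, hp, hpe⟩ := hi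
    obtain ⟨q, hq, -, hqm⟩ := Polynomial.lifts_and_degree_eq_and_monic
      (f := (algebraMap D K).rangeRestrict) (p := p) (by
        rw [Polynomial.lifts_iff_coeff_lifts]
        intro n
        exact (algebraMap D K).rangeRestrict_surjective _) hp
    refine ⟨q, hqm, ?_⟩
    rw [← hq, Polynomial.eval₂_map] at hpe
    exact hpe
  exact (isIntegrallyClosed_iff K).mp inferInstance hi2

theorem aux_valMonoid {G : Type*} [AddCommGroup G] (S : AddSubmonoid G)
    (hroot : ∀ (g : G) (n : ℕ), 0 < n → n • g ∈ S → g ∈ S) (g : G) (hg : g ∉ S) :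
    ∃ V : AddSubmonoid G, S ≤ V ∧ g ∉ V ∧ ∀ x, x ∈ V ∨ -x ∈ V := by
  let P : Set (AddSubmonoid G) := {T | -g ∈ T ∧ g ∉ T}
  have h0 : S ⊔ AddSubmonoid.multiples (-g) ∈ P := by
    refine ⟨(le_sup_right : _ ≤ S ⊔ AddSubmonoid.multiples (-g))
      (AddSubmonoid.mem_multiples _), fun h => ?_⟩
    obtain ⟨s, hs, z, hz, e⟩ := AddSubmonoid.mem_sup.mp h
    obtain ⟨n, rfl⟩ := AddSubmonoid.mem_multiples_iff _ _ |>.mp hz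
    apply hg
    apply hroot g (n + 1) (Nat.succ_pos n)
    have : (n + 1) • g = s := by
      rw [succ_nsmul]
      nth_rewrite 2 [← e]
      rw [smul_neg]; abel
    rwa [this]
  obtain ⟨V, hV, hmax⟩ := zorn_le_nonempty₀ P (by
    intro c hcP hc T hT
    refine ⟨sSup c, ⟨?_, ?_⟩, fun z hz => le_sSup hz⟩
    · exact (le_sSup hT : T ≤ sSup c) (hcP hT).1
    · intro h
      obtain ⟨T', hT', h'⟩ := (AddSubmonoid.mem_sSup_of_directedOn ⟨T, hT⟩ hc.directedOn).mp h
      exact (hcP hT').2 h') _ h0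
  have key : ∀ x, x ∉ V → ∃ t ∈ V, ∃ n : ℕ, 0 < n ∧ t + n • x = g := by
    intro x hx
    have hn : V ⊔ AddSubmonoid.multiples x ∉ P := by
      intro hP
      have := hmax.2 hP le_sup_left
      exact hx (this ((le_sup_right : _ ≤ V ⊔ AddSubmonoid.multiples x)
        (AddSubmonoid.mem_multiples _)))
    have hgm : g ∈ V ⊔ AddSubmonoid.multiples x := by
      by_contra hgn
      exact hn ⟨(le_sup_left : V ≤ _) hmax.1.1, hgn⟩
    obtain ⟨t, ht, z, hz, e⟩ := AddSubmonoid.mem_sup.mp hgm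
    obtain ⟨n, rfl⟩ := AddSubmonoid.mem_multiples_iff _ _ |>.mp hz
    refine ⟨t, ht, n, Nat.pos_of_ne_zero ?_, e⟩
    rintro rfl
    apply hmax.1.2
    rw [← e]; simpa using ht
  refine ⟨V, le_sup_left.trans hV, hmax.1.2, fun x => ?_⟩
  by_contra hc
  push Not at hc
  obtain ⟨t, ht, n, hn, e⟩ := key x hc.1
  obtain ⟨t', ht', m, hm, e'⟩ := key (-x) hc.2
  apply hmax.1.2
  have h1 : (m + n) • g = m • t + n • t' := by
    rw [add_smul]
    nth_rewrite 1 [← e]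
    rw [← e', smul_add, smul_add, smul_neg, smul_neg, smul_smul, smul_smul, mul_comm n m]
    abel
  obtain ⟨k, hk⟩ : ∃ k, m + n = k + 1 := ⟨m + n - 1, by omega⟩
  have h2 : g = (m • t + n • t') + k • (-g) := by
    rw [← h1, hk, succ_nsmul, smul_neg]; abel
  rw [h2]
  exact V.add_mem (V.add_mem (V.nsmul_mem ht _) (V.nsmul_mem ht' _)) (V.nsmul_mem hmax.1.1 _)

theorem aux_min {K G : Type*} [Field K] [AddCommGroup G] (V : AddSubmonoid G)
    (hV : ∀ x, x ∈ V ∨ -x ∈ V) (f : AddMonoidAlgebra K G) (hf : f ≠ 0) :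
    ∃ s0 : G, ∃ f0 f1 : AddMonoidAlgebra K G, f = f0 + f1 ∧ f0 ≠ 0 ∧
      (∀ s, f.coeff s ≠ 0 → s - s0 ∈ V) ∧
      (∀ s, f0.coeff s ≠ 0 → s - s0 ∈ V ∧ s0 - s ∈ V) ∧
      (∀ s, f1.coeff s ≠ 0 → s - s0 ∈ V ∧ s0 - s ∉ V) := by
  classical
  have hmin : ∀ T : Finset G, T.Nonempty → ∃ s0 ∈ T, ∀ s ∈ T, s - s0 ∈ V := by
    intro T hT
    induction hT using Finset.Nonempty.cons_induction with
    | singleton a => exact ⟨a, by simp, by simp⟩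
    | cons a T ha hT ih =>
      obtain ⟨s0, hs0, h⟩ := ih
      rcases hV (a - s0) with h1 | h1
      · refine ⟨s0, by simp [hs0], fun s hs => ?_⟩
        rcases Finset.mem_cons.mp hs with rfl | hs
        · exact h1
        · exact h s hs
      · refine ⟨a, by simp, fun s hs => ?_⟩
        rcases Finset.mem_cons.mp hs with rfl | hs
        · simp
        · have := V.add_mem (h s hs) h1
          simpa using this
  obtain ⟨s0, hs0, hm⟩ := hmin f.coeff.support (by
    rw [Finsupp.support_nonempty_iff]
    simpa using hf)
  have hm' : ∀ s, f.coeff s ≠ 0 → s - s0 ∈ V := fun s hs => hm s (Finsupp.mem_support_iff.mpr hs)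
  have hc0 : ∀ s, (Finsupp.filter (fun s => s0 - s ∈ V) f.coeff) s =
      if s0 - s ∈ V then f.coeff s else 0 := fun s => Finsupp.filter_apply _ _ _
  have hc1 : ∀ s, (Finsupp.filter (fun s => ¬ s0 - s ∈ V) f.coeff) s =
      if ¬ s0 - s ∈ V then f.coeff s else 0 := fun s => Finsupp.filter_apply _ _ _
  refine ⟨s0, .ofCoeff (Finsupp.filter (fun s => s0 - s ∈ V) f.coeff),
    .ofCoeff (Finsupp.filter (fun s => ¬ s0 - s ∈ V) f.coeff), ?_, ?_, hm', ?_, ?_⟩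
  · apply AddMonoidAlgebra.coeff_injective
    rw [AddMonoidAlgebra.coeff_add]
    exact (Finsupp.filter_pos_add_filter_neg _ _).symm
  · intro h
    have := congrArg (fun z => z.coeff s0) h
    simp only [AddMonoidAlgebra.coeff_ofCoeff, hc0] at this
    rw [if_pos (by simp)] at this
    exact Finsupp.mem_support_iff.mp hs0 this
  · intro s hs
    rw [AddMonoidAlgebra.coeff_ofCoeff, hc0] at hs
    split_ifs at hs with hif
    · exact ⟨hm' s hs, hif⟩
    · exact absurd rfl hs
  · intro s hs
    rw [AddMonoidAlgebra.coeff_ofCoeff, hc1] at hs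
    split_ifs at hs with hif
    · exact absurd rfl hs
    · exact ⟨hm' s hs, hif⟩

theorem aux_expV {K G : Type*} [Field K] [AddCommGroup G] [UniqueSums G] (V : AddSubmonoid G)
    (hV : ∀ x, x ∈ V ∨ -x ∈ V) (f y : AddMonoidAlgebra K G)
    (h : ∀ g, (f * y).coeff g ≠ 0 → g ∈ V) (s t : G) (hs : f.coeff s ≠ 0) (ht : y.coeff t ≠ 0) :
    s + t ∈ V := by
  have hf : f ≠ 0 := by rintro rfl; exact hs rfl
  have hy : y ≠ 0 := by rintro rfl; exact ht rfl
  obtain ⟨s0, f0, f1, ef, hf0, hfm, hf0m, hf1m⟩ := aux_min V hV f hf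
  obtain ⟨t0, y0, y1, ey, hy0, hym, hy0m, hy1m⟩ := aux_min V hV y hy
  obtain ⟨u, hu⟩ : ∃ u, (f0 * y0).coeff u ≠ 0 := by
    by_contra hc
    push Not at hc
    exact mul_ne_zero hf0 hy0 (by ext u; simpa using hc u)
  obtain ⟨p, q, hp, hq, rfl⟩ := aux_coeff_mul_ne hu
  have e : f * y = f0 * y0 + f0 * y1 + f1 * y := by
    rw [ef, ey]; ring
  have z1 : (f0 * y1).coeff (p + q) = 0 := by
    by_contra hc
    obtain ⟨a, b, ha, hb, hab⟩ := aux_coeff_mul_ne hc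
    apply (hy1m b hb).2
    have : t0 - b = (a - s0) + (s0 - p) + (t0 - q) := by
      have : a = p + q - b := by rw [← hab]; abel
      rw [this]; abel
    rw [this]
    exact V.add_mem (V.add_mem (hf0m a ha).1 (hf0m p hp).2) (hy0m q hq).2
  have z2 : (f1 * y).coeff (p + q) = 0 := by
    by_contra hc
    obtain ⟨a, b, ha, hb, hab⟩ := aux_coeff_mul_ne hc
    apply (hf1m a ha).2
    have : s0 - a = (b - t0) + (s0 - p) + (t0 - q) := by
      have : a = p + q - b := by rw [← hab]; abel
      rw [this]; abel
    rw [this]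
    exact V.add_mem (V.add_mem (hym b hb) (hf0m p hp).2) (hy0m q hq).2
  have hpq : p + q ∈ V := by
    apply h
    rw [e, AddMonoidAlgebra.coeff_add, AddMonoidAlgebra.coeff_add, Finsupp.add_apply,
      Finsupp.add_apply, z1, z2, add_zero, add_zero]
    exact hu
  have : s + t = (p + q) + (s - s0) + (s0 - p) + (t - t0) + (t0 - q) := by abel
  rw [this]
  exact V.add_mem (V.add_mem (V.add_mem (V.add_mem hpq (hfm s hs)) (hf0m p hp).2) (hym t ht))
    (hy0m q hq).2

theorem aux_exp {K G : Type*} [Field K] [AddCommGroup G] [UniqueSums G] (S : AddSubmonoid G)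
    (hS : IsKrullMonoid S) (f y : AddMonoidAlgebra K G)
    (h : ∀ g, (f * y).coeff g ≠ 0 → g ∈ S) (s t : G) (hs : f.coeff s ≠ 0) (ht : y.coeff t ≠ 0)
    (hq : ∀ x : G, ∃ a ∈ S, ∃ b ∈ S, x = a - b) :
    s + t ∈ S := by
  have hroot : ∀ (g : G) (n : ℕ), 0 < n → n • g ∈ S → g ∈ S := by
    intro g n hn hg
    apply hS.1 g
    obtain ⟨a, ha, b, hb, e⟩ := hq g
    refine ⟨n • b, S.nsmul_mem hb _, fun m => ?_⟩
    have h1 : m • g = (m / n) • (n • g) + (m % n) • g := by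
      rw [smul_smul, ← add_smul, Nat.div_add_mod']
    have hlt := Nat.mod_lt m hn
    obtain ⟨k, hk⟩ : ∃ k, n = m % n + k := ⟨n - m % n, by omega⟩
    have h2 : n • b + m • g = (m / n) • (n • g) + (m % n) • a + k • b := by
      rw [h1]
      have : n • b = (m % n) • b + k • b := by rw [← add_smul, ← hk]
      have h3 : (m % n) • a = (m % n) • g + (m % n) • b := by
        rw [← smul_add, e, sub_add_cancel]
      rw [this, h3]; abel
    rw [h2]
    exact S.add_mem (S.add_mem (S.nsmul_mem hg _) (S.nsmul_mem ha _)) (S.nsmul_mem hb _)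
  by_contra hn
  obtain ⟨V, hSV, hgV, htot⟩ := aux_valMonoid S hroot _ hn
  exact hgV (aux_expV V htot f y (fun g hg => hSV (h g hg)) s t hs ht)

theorem aux_mixed {K G : Type*} [Semiring K] [AddCommMonoid G] (A : Set K) (E : Set G)
    (h0 : (0 : K) ∈ A) (hadd : ∀ a ∈ A, ∀ b ∈ A, a + b ∈ A) (x : AddMonoidAlgebra K G) :
    x ∈ mixedSpan A E ↔ ∀ g, x.coeff g ≠ 0 → x.coeff g ∈ A ∧ g ∈ E := by
  classical
  constructor
  · rintro ⟨n, p, h, hp, hh, rfl⟩ g hg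
    have hc : (∑ i, AddMonoidAlgebra.single (h i) (p i)).coeff g =
        ∑ i, if h i = g then p i else 0 := by
      rw [AddMonoidAlgebra.coeff_sum, Finsupp.finsetSum_apply]
      simp only [AddMonoidAlgebra.coeff_single, Finsupp.single_apply]
    rw [hc] at hg ⊢
    constructor
    · refine Finset.sum_induction _ (· ∈ A) (fun a b ha hb => hadd a ha b hb) h0 ?_
      intro i _
      split_ifs
      · exact hp i
      · exact h0
    · obtain ⟨i, -, hi⟩ := Finset.exists_ne_zero_of_sum_ne_zero hg
      split_ifs at hi with hif
      · exact hif ▸ hh i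
      · exact absurd rfl hi
  · intro h
    let e := x.coeff.support.equivFin
    refine ⟨x.coeff.support.card, fun i => x.coeff (e.symm i), fun i => (e.symm i : G), ?_, ?_, ?_⟩
    · intro i
      exact (h _ (Finsupp.mem_support_iff.mp (e.symm i).2)).1
    · intro i
      exact (h _ (Finsupp.mem_support_iff.mp (e.symm i).2)).2
    · rw [e.symm.sum_comp (fun z => AddMonoidAlgebra.single (z : G) (x.coeff z)),
        Finset.sum_coe_sort x.coeff.support (fun z => AddMonoidAlgebra.single z (x.coeff z))]
      apply AddMonoidAlgebra.coeff_injective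
      rw [AddMonoidAlgebra.coeff_sum]
      exact (Finsupp.sum_single x.coeff).symm

/-- **Lemma (Chang).** Let `D` be a Krull domain with quotient field `K` and `S` a Krull
monoid with quotient group `G` such that `D[S]` is a Krull domain. For `0 ≠ f ∈ K[G]`,
one has `f·K[G] ∩ D[S] = f·A_f⁻¹[E_f⁻¹]`, where `A_f` is the fractional `D`-ideal generated
by the coefficients of `f` and `E_f` is the fractional `S`-ideal generated by the exponents
of `f`; here `D[S]` and the right-hand side are viewed as subsets of `K[G]`. -/
theorem chang_lemma {D K G : Type*} [CommRing D] [IsDomain D] [Field K] [Algebra D K]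
    [IsFractionRing D K] [AddCommGroup G] (S : AddSubmonoid G)
    (hq : ∀ x : G, ∃ a ∈ S, ∃ b ∈ S, x = a - b)
    (htf : ∀ g : G, g ≠ 0 → ¬IsOfFinAddOrder g)
    [IsDomain (AddMonoidAlgebra D S)]
    (hD : IsKrullDomain D) (hS : IsKrullMonoid S)
    (hDS : IsKrullDomain (AddMonoidAlgebra D S))
    (f : AddMonoidAlgebra K G) (hf : f ≠ 0) :
    {x : AddMonoidAlgebra K G | ∃ y : AddMonoidAlgebra K G, x = f * y} ∩
        mixedSpan (Set.range (algebraMap D K)) (S : Set G) =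
      (fun y => f * y) '' mixedSpan
        {c : K | ∀ y ∈ Submodule.span D ((fun g : G => f.coeff g) '' ↑f.coeff.support),
          c * y ∈ Set.range (algebraMap D K)}
        (monDual S {x : G | ∃ s ∈ f.coeff.support, ∃ t ∈ S, x = s + t}) := by
  have hU : UniqueSums G := aux_uniqueSums htf
  have hIC : IsIntegrallyClosed D := aux_integrallyClosed hD
  have r0 : (0 : K) ∈ Set.range (algebraMap D K) := ⟨0, map_zero _⟩
  have radd : ∀ a ∈ Set.range (algebraMap D K), ∀ b ∈ Set.range (algebraMap D K),
      a + b ∈ Set.range (algebraMap D K) := by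
    rintro _ ⟨a, rfl⟩ _ ⟨b, rfl⟩
    exact ⟨a + b, map_add _ _ _⟩
  have i0 : (0 : K) ∈ {c : K | ∀ y ∈ Submodule.span D
      ((fun g : G => f.coeff g) '' ↑f.coeff.support), c * y ∈ Set.range (algebraMap D K)} := by
    intro y _
    rw [zero_mul]; exact r0
  have iadd : ∀ a ∈ {c : K | ∀ y ∈ Submodule.span D
      ((fun g : G => f.coeff g) '' ↑f.coeff.support), c * y ∈ Set.range (algebraMap D K)},
      ∀ b ∈ {c : K | ∀ y ∈ Submodule.span D
      ((fun g : G => f.coeff g) '' ↑f.coeff.support), c * y ∈ Set.range (algebraMap D K)},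
      a + b ∈ {c : K | ∀ y ∈ Submodule.span D
      ((fun g : G => f.coeff g) '' ↑f.coeff.support), c * y ∈ Set.range (algebraMap D K)} := by
    intro a ha b hb y hy
    rw [add_mul]
    exact radd _ (ha y hy) _ (hb y hy)
  ext x
  constructor
  · rintro ⟨⟨y, rfl⟩, hx⟩
    rw [aux_mixed _ _ r0 radd] at hx
    refine ⟨y, ?_, rfl⟩
    rw [aux_mixed _ _ i0 iadd]
    intro t ht
    constructor
    · intro z hz
      induction hz using Submodule.span_induction with
      | mem z hz =>
        obtain ⟨s, -, rfl⟩ := hz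
        rw [mul_comm]
        refine aux_coeff f y (fun g => ?_) s t
        by_cases hg : (f * y).coeff g = 0
        · rw [hg]; exact r0
        · exact (hx g hg).1
      | zero => rw [mul_zero]; exact r0
      | add a b _ _ ha hb => rw [mul_add]; exact radd _ ha _ hb
      | smul d a _ ha =>
        obtain ⟨w, hw⟩ := ha
        refine ⟨d * w, ?_⟩
        rw [map_mul, hw, Algebra.smul_def]; ring
    · rintro _ ⟨s, hs, w, hw, rfl⟩
      have := aux_exp S hS f y (fun g hg => (hx g hg).2) s t (Finsupp.mem_support_iff.mp hs) ht hq
      have e : t + (s + w) = (s + t) + w := by abel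
      rw [e]
      exact S.add_mem this hw
  · rintro ⟨y, hy, rfl⟩
    rw [aux_mixed _ _ i0 iadd] at hy
    refine ⟨⟨y, rfl⟩, ?_⟩
    rw [aux_mixed _ _ r0 radd]
    intro g hg
    constructor
    · classical
      change (f * y).coeff g ∈ _
      rw [AddMonoidAlgebra.coeff_mul]
      refine Finset.sum_induction _ (· ∈ Set.range (algebraMap D K))
        (fun a b ha hb => radd a ha b hb) r0 fun s hs => ?_
      refine Finset.sum_induction _ (· ∈ Set.range (algebraMap D K))
        (fun a b ha hb => radd a ha b hb) r0 fun t ht => ?_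
      beta_reduce
      split_ifs
      · rw [mul_comm]
        exact (hy t (Finsupp.mem_support_iff.mp ht)).1 _
          (Submodule.subset_span ⟨s, hs, rfl⟩)
      · exact r0
    · obtain ⟨s, t, hs, ht, rfl⟩ := aux_coeff_mul_ne hg
      have := (hy t ht).2 (s + 0) ⟨s, Finsupp.mem_support_iff.mpr hs, 0, S.zero_mem, rfl⟩
      rwa [add_zero, add_comm] at this

end
end

section
/- Let D be a Krull domain with quotient field K ≠ D and let I be a nonzero divisorial (fractional) ideal of D. Then there exist a, b ∈ K and a height-one prime ideal P of D such that I^{-1} = (aD + bD)_v and v_P(a/b) = 1, where v_P is the P-adic valuation on K and (·)_v denotes the divisorial closure. -/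
open scoped nonZeroDivisors

noncomputable section

/-- The subset `P·D_P` of `K`: elements of the form `a / b` with `a ∈ P`, `b ∉ P`. -/
def primeLocSet (D K : Type*) [CommRing D] [Field K] [Algebra D K] (P : Ideal D) : Set K :=
  {x : K | ∃ a ∈ P, ∃ b : D, b ∉ P ∧ algebraMap D K b * x = algebraMap D K a}

/-- `v_P(x) = 1` for the normalized `P`-adic valuation at a height-one prime `P` of a Krull
domain: `x ∈ P·D_P` but `x` is not a product of two elements of `P·D_P`. -/
def valOneAt (D : Type*) {K : Type*} [CommRing D] [Field K] [Algebra D K] (P : Ideal D)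
    (x : K) : Prop :=
  x ∈ primeLocSet D K P ∧ ¬ ∃ y ∈ primeLocSet D K P, ∃ z ∈ primeLocSet D K P, x = y * z


def InD (D : Type*) {K : Type*} [CommRing D] [Field K] [Algebra D K] (x : K) : Prop :=
  x ∈ (algebraMap D K).range

set_option linter.unusedSectionVars false

section helpers
variable {D K : Type*} [CommRing D] [IsDomain D] [Field K] [Algebra D K] [IsFractionRing D K]

theorem InD.add {x y : K} (hx : InD D x) (hy : InD D y) : InD D (x + y) :=
  Subring.add_mem _ hx hy

theorem InD.mul {x y : K} (hx : InD D x) (hy : InD D y) : InD D (x * y) :=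
  Subring.mul_mem _ hx hy

theorem InD.map (d : D) : InD D (algebraMap D K d) := ⟨d, rfl⟩

theorem InD.map_mul (d : D) {x : K} (hx : InD D x) : InD D (algebraMap D K d * x) :=
  (InD.map d).mul hx

/-- The ideal of `d` with `d w ∈ D`. -/
def colI (D : Type*) {K : Type*} [CommRing D] [Field K] [Algebra D K] (w : K) : Ideal D where
  carrier := {d | InD D (algebraMap D K d * w)}
  add_mem' := by
    intro a b ha hb
    have := Subring.add_mem (algebraMap D K).range (x := algebraMap D K a * w) (y := algebraMap D K b * w) ha hb
    change algebraMap D K (a + b) * w ∈ (algebraMap D K).range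
    rw [map_add, add_mul]; exact this
  zero_mem' := ⟨0, by simp⟩
  smul_mem' := by
    intro c x hx
    have := Subring.mul_mem (algebraMap D K).range ⟨c, rfl⟩ hx
    change algebraMap D K (c * x) * w ∈ (algebraMap D K).range
    rw [map_mul, mul_assoc]; exact this

theorem mem_colI {w : K} {d : D} : d ∈ colI D w ↔ InD D (algebraMap D K d * w) := Iff.rfl

/-- Elementary form of divisoriality of an ideal. -/
def Crit (K : Type*) [Field K] [Algebra D K] (A : Ideal D) : Prop :=
  ∀ d, d ∉ A → ∃ x : K, (∀ e ∈ A, InD D (x * algebraMap D K e)) ∧ ¬ InD D (x * algebraMap D K d)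

theorem crit_colI (w : K) : Crit K (colI D w) := by
  intro d hd
  exact ⟨w, fun e he => by rw [mul_comm]; exact he, fun h => hd (by rw [mem_colI, mul_comm]; exact h)⟩

theorem inD_iff_mem_one {x : K} : InD D x ↔ x ∈ (1 : FractionalIdeal D⁰ K) := by
  rw [FractionalIdeal.mem_one_iff]; rfl

theorem crit_div {A : Ideal D} (h : Crit K A) :
    divClosure (A : FractionalIdeal D⁰ K) = (A : FractionalIdeal D⁰ K) := by
  unfold divClosure
  by_cases hA : A = ⊥
  · subst hA; simp
  have hA' : (A : FractionalIdeal D⁰ K) ≠ 0 := by simpa using hA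
  have h1 : (1 / (A : FractionalIdeal D⁰ K)) ≠ 0 := by
    intro h0
    have : (1 : K) ∈ (1 / (A : FractionalIdeal D⁰ K)) := by
      rw [FractionalIdeal.mem_div_iff_of_ne_zero hA']
      intro y hy
      obtain ⟨d, -, rfl⟩ := (FractionalIdeal.mem_coeIdeal _).1 hy
      rw [one_mul, ← inD_iff_mem_one]; exact InD.map d
    rw [h0] at this
    simp at this
  apply le_antisymm
  · intro x hx
    rw [FractionalIdeal.mem_div_iff_of_ne_zero h1] at hx
    have hk : ∀ z : K, (∀ e ∈ A, InD D (z * algebraMap D K e)) → InD D (x * z) := by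
      intro z hz
      rw [inD_iff_mem_one]
      apply hx
      rw [FractionalIdeal.mem_div_iff_of_ne_zero hA']
      intro y hy
      obtain ⟨d, hd, rfl⟩ := (FractionalIdeal.mem_coeIdeal _).1 hy
      rw [← inD_iff_mem_one]; exact hz d hd
    obtain ⟨d, hd⟩ := hk 1 (fun e _ => by rw [one_mul]; exact InD.map e)
    rw [mul_one] at hd
    subst hd
    rw [FractionalIdeal.mem_coeIdeal]
    refine ⟨d, ?_, rfl⟩
    by_contra hdA
    obtain ⟨z, hz, hz'⟩ := h d hdA
    exact hz' (by rw [mul_comm]; exact hk z hz)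
  · intro x hx
    rw [FractionalIdeal.mem_div_iff_of_ne_zero h1]
    intro y hy
    rw [FractionalIdeal.mem_div_iff_of_ne_zero hA'] at hy
    rw [mul_comm]; exact hy x hx

theorem inD_equiv {L : Type*} [Field L] [Algebra D L] (e : K ≃ₐ[D] L) {x : K} :
    InD D (e x) ↔ InD D x := by
  constructor
  · rintro ⟨d, hd⟩
    exact ⟨d, e.injective (by rw [← hd]; simp)⟩
  · rintro ⟨d, rfl⟩
    exact ⟨d, by simp⟩

theorem crit_transfer {L : Type*} [Field L] [Algebra D L] (e : K ≃ₐ[D] L) {A : Ideal D}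
    (h : Crit K A) : Crit L A := by
  intro d hd
  obtain ⟨x, h1, h2⟩ := h d hd
  refine ⟨e x, fun c hc => ?_, fun hc => h2 ?_⟩
  · have := (inD_equiv e).2 (h1 c hc)
    simpa using this
  · rw [← inD_equiv e]; simpa using hc

theorem krull_acc (hD : IsKrullDomain D) : WellFoundedGT {A : Ideal D // Crit K A} := by
  rw [wellFoundedGT_iff_monotone_chain_condition]
  intro f
  obtain ⟨n, hn⟩ := hD.2 (fun n => (f n).1)
    (fun n => crit_div (crit_transfer (FractionRing.algEquiv D K).symm (f n).2))
    (fun n => f.monotone (Nat.le_succ n))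
  exact ⟨n, fun m hm => Subtype.ext (hn m hm).symm⟩

theorem krull_cic (hD : IsKrullDomain D) (w : K) (c : D) (hc : c ≠ 0)
    (h : ∀ n : ℕ, InD D (algebraMap D K c * w ^ n)) : InD D w := by
  have e := (FractionRing.algEquiv D K).symm
  rw [← inD_equiv e]
  apply hD.1 (e w) ⟨c, hc, fun n => ?_⟩
  have := (inD_equiv e).2 (h n)
  rw [map_mul, map_pow, e.commutes] at this
  exact this

/-- Maximal divisorial ideals. -/
def MaxC (K : Type*) [Field K] [Algebra D K] (Q : Ideal D) : Prop :=
  ∃ w : K, ¬ InD D w ∧ Q = colI D w ∧ ∀ w' : K, ¬ InD D w' → Q ≤ colI D w' → colI D w' = Q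

theorem exists_maxC (hD : IsKrullDomain D) (w : K) (hw : ¬ InD D w) :
    ∃ Q : Ideal D, MaxC K Q ∧ colI D w ≤ Q := by
  have := krull_acc (K := K) hD
  obtain ⟨m, ⟨u, hu, hmu, hle⟩, hmin⟩ := (wellFounded_gt (α := {A : Ideal D // Crit K A})).has_min
    {A | ∃ u : K, ¬ InD D u ∧ A.1 = colI D u ∧ colI D w ≤ A.1}
    ⟨⟨colI D w, crit_colI w⟩, w, hw, rfl, le_rfl⟩
  refine ⟨m.1, ⟨u, hu, hmu, fun w' hw' hl => ?_⟩, hle⟩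
  by_contra hne
  refine hmin ⟨colI D w', crit_colI w'⟩ ⟨w', hw', rfl, hle.trans hl⟩ ?_
  exact lt_of_le_of_ne hl (fun h => hne (by rw [h]))

theorem MaxC.prime {Q : Ideal D} (hQ : MaxC K Q) : Q.IsPrime := by
  obtain ⟨w, hw, rfl, hm⟩ := hQ
  refine ⟨?_, ?_⟩
  · rw [Ideal.ne_top_iff_one, mem_colI]
    simpa using hw
  · intro x y hxy
    by_contra! hcon
    obtain ⟨hx, hy⟩ := hcon
    rw [mem_colI] at hy
    have := hm (algebraMap D K y * w) hy (by
      intro d hd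
      have := InD.map_mul y hd
      rw [mem_colI]; convert this using 1; ring)
    apply hx
    rw [← this, mem_colI]
    rw [mem_colI] at hxy
    convert hxy using 1; rw [map_mul]; ring

theorem MaxC.ne_top {Q : Ideal D} (hQ : MaxC K Q) : Q ≠ ⊤ := hQ.prime.ne_top

theorem MaxC.eq_of_le {Q Q' : Ideal D} (hQ : MaxC K Q) (hQ' : MaxC K Q') (h : Q ≤ Q') :
    Q = Q' := by
  obtain ⟨w, hw, rfl, hm⟩ := hQ
  obtain ⟨w', hw', rfl, hm'⟩ := hQ'
  exact (hm w' hw' h).symm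

theorem MaxC.ne_bot {Q : Ideal D} (hQ : MaxC K Q) : Q ≠ ⊥ := by
  obtain ⟨w, hw, rfl, hm⟩ := hQ
  obtain ⟨a, b, hb, rfl⟩ := IsFractionRing.div_surjective (A := D) w
  have hb0 : b ≠ 0 := nonZeroDivisors.ne_zero hb
  intro h
  apply hb0
  rw [← Ideal.mem_bot, ← h, mem_colI]
  have : algebraMap D K b ≠ 0 := by simpa using hb0
  rw [mul_div_cancel₀ _ this]
  exact InD.map a

theorem MaxC.heightOne (hD : IsKrullDomain D) {P : Ideal D} (hP : MaxC K P) :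
    IsHeightOnePrime P := by
  refine ⟨hP.prime, hP.ne_bot, fun Q hQ hQ0 hQP => ?_⟩
  obtain ⟨w, hw, rfl, hm⟩ := hP
  by_contra hne
  obtain ⟨p, hp, hpQ⟩ := SetLike.exists_of_lt (lt_of_le_of_ne hQP hne)
  obtain ⟨x, hx, hx0⟩ := Submodule.exists_mem_ne_zero_of_ne_bot hQ0
  apply hw
  apply krull_cic hD w x hx0
  have key : ∀ n : ℕ, ∃ q ∈ Q, algebraMap D K q = algebraMap D K x * w ^ n := by
    intro n
    induction n with
    | zero => exact ⟨x, hx, by simp⟩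
    | succ n ih =>
      obtain ⟨q, hq, hqe⟩ := ih
      obtain ⟨r, hr⟩ := mem_colI.1 (hQP hq)
      obtain ⟨t, ht⟩ := mem_colI.1 hp
      refine ⟨r, ?_, by rw [hr, hqe]; ring⟩
      have : p * r = t * q := by
        apply IsFractionRing.injective D K
        rw [map_mul, map_mul, hr, ht]; ring
      exact (hQ.mem_or_mem (this ▸ Q.mul_mem_left t hq : p * r ∈ Q)).resolve_left hpQ
  intro n
  obtain ⟨q, -, hq⟩ := key n
  exact ⟨q, hq⟩

theorem exists_not_mem (hD : IsKrullDomain D) (w : K) (hw : ¬ InD D w) (F : Set K)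
    (hF : ∃ y ∈ F, y ≠ 0) (hF' : ∃ a : K, a ≠ 0 ∧ ∀ y ∈ F, InD D (a * y)) :
    ∃ a : K, (∀ y ∈ F, InD D (a * y)) ∧ ∃ y ∈ F, ¬ InD D (a * y * w) := by
  by_contra! hcon
  obtain ⟨a, ha0, ha⟩ := hF'
  obtain ⟨y, hy, hy0⟩ := hF
  have key : ∀ n : ℕ, ∀ y ∈ F, InD D (a * w ^ n * y) := by
    intro n
    induction n with
    | zero => simpa using ha
    | succ n ih =>
      intro y hy
      have := hcon _ ih y hy
      convert this using 1; ring
  obtain ⟨c, hc⟩ := ha y hy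
  apply hw
  apply krull_cic hD w c
  · rintro rfl
    rw [map_zero] at hc
    exact mul_ne_zero ha0 hy0 hc.symm
  · intro n
    rw [hc]
    convert key n y hy using 1; ring

theorem finite_maxC (hD : IsKrullDomain D) (c : D) (hc : c ≠ 0) :
    {Q : Ideal D | MaxC K Q ∧ c ∈ Q}.Finite := by
  by_contra hinf
  have hinf : {Q : Ideal D | MaxC K Q ∧ c ∈ Q}.Infinite := hinf
  let q := hinf.natEmbedding
  have hcK : algebraMap D K c ≠ 0 := by simpa using hc
  let M : ℕ → Ideal D := fun n => (Finset.range n).inf (fun i => (q i).1)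
  have hcM : ∀ n, c ∈ M n := by
    intro n
    simp only [M, Submodule.mem_finsetInf]
    exact fun i _ => (q i).2.2
  have hanti : ∀ m n, m ≤ n → M n ≤ M m := fun m n h =>
    Finset.inf_mono (Finset.range_subset_range.2 h)
  have memf : ∀ (n : ℕ) (d : D), d ∈ (Ideal.span {c}).colon (M n : Set D) ↔
      ∀ m ∈ M n, c ∣ d * m := by
    intro n d
    simp [Submodule.mem_colon, Ideal.mem_span_singleton]
  have hcrit : ∀ n, Crit K ((Ideal.span {c}).colon (M n : Set D)) := by
    intro n d hd
    rw [memf] at hd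
    push Not at hd
    obtain ⟨m, hm, hmd⟩ := hd
    refine ⟨algebraMap D K m / algebraMap D K c, fun e he => ?_, ?_⟩
    · obtain ⟨r, hr⟩ := (memf n e).1 he m hm
      refine ⟨r, ?_⟩
      field_simp
      rw [← map_mul, ← map_mul, mul_comm r, ← hr, mul_comm]
    · rintro ⟨r, hr⟩
      apply hmd
      refine ⟨r, ?_⟩
      apply IsFractionRing.injective D K
      rw [map_mul, map_mul, hr]
      field_simp
  have hmono : Monotone (fun n => (⟨_, hcrit n⟩ : {A : Ideal D // Crit K A})) := by
    intro m n hmn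
    change (Ideal.span {c}).colon (M m : Set D) ≤ (Ideal.span {c}).colon (M n : Set D)
    intro d hd
    rw [memf] at hd ⊢
    exact fun x hx => hd x (hanti m n hmn hx)
  have hw := krull_acc (K := K) hD
  rw [wellFoundedGT_iff_monotone_chain_condition] at hw
  obtain ⟨n, hn⟩ := hw ⟨_, hmono⟩
  have heq := congrArg Subtype.val (hn (n + 1) (Nat.le_succ n))
  change (Ideal.span {c}).colon (M n : Set D) = (Ideal.span {c}).colon (M (n+1) : Set D) at heq
  have hMle : M n ≤ (q n).1 := by
    obtain ⟨⟨w, hw, hqw, -⟩, hcq⟩ := (q n).2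
    rw [hqw] at hcq ⊢
    obtain ⟨r, hr⟩ := mem_colI.1 hcq
    have h1 : r ∈ (Ideal.span {c}).colon (M (n+1) : Set D) := by
      rw [memf]
      intro m hm
      have hmq : m ∈ (q n).1 :=
        (Finset.inf_le (f := fun i => (q i).1) (Finset.mem_range.2 (Nat.lt_succ_self n))) hm
      rw [hqw] at hmq
      obtain ⟨t, ht⟩ := mem_colI.1 hmq
      refine ⟨t, ?_⟩
      apply IsFractionRing.injective D K
      rw [map_mul, map_mul, hr, ht]; ring
    rw [← heq, memf] at h1
    intro m hm
    obtain ⟨t, ht⟩ := h1 m hm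
    refine mem_colI.2 ⟨t, ?_⟩
    apply mul_left_cancel₀ hcK
    rw [← map_mul, ← ht, map_mul, hr]; ring
  obtain ⟨i, hi, hle⟩ := ((q n).2.1.prime.inf_le').1 hMle
  have := (q i).2.1.eq_of_le (q n).2.1 hle
  have := q.injective (Subtype.ext this)
  simp at hi
  omega

theorem main_induct (hD : IsKrullDomain D) (I : Set K) (hI0 : ∃ y ∈ I, y ≠ 0)
    (hI1 : ∃ a : K, a ≠ 0 ∧ ∀ y ∈ I, InD D (a * y)) (w : K) (hw : ¬ InD D w)
    (hP : MaxC K (colI D w)) (S : Finset (Ideal D)) :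
    (∀ Q ∈ S, MaxC K Q ∧ Q ≠ colI D w) →
    ∃ a : K, (∀ y ∈ I, InD D (a * y) ∧ InD D (a * y * w)) ∧
      (∃ y ∈ I, ¬ InD D (a * y * w * w)) ∧
      ∀ Q ∈ S, ∃ y ∈ I, ∃ d : D, d ∉ Q ∧ algebraMap D K d = a * y := by
  classical
  induction S using Finset.induction_on with
  | empty =>
    intro _
    obtain ⟨a, ha, y, hy, hya⟩ := exists_not_mem hD w hw (I ∪ (fun y => y * w) '' I)
      (by obtain ⟨y, hy, h⟩ := hI0; exact ⟨y, Or.inl hy, h⟩)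
      (by
        obtain ⟨a, ha, h⟩ := hI1
        obtain ⟨s, t, ht, rfl⟩ := IsFractionRing.div_surjective (A := D) w
        have ht0 : algebraMap D K t ≠ 0 := by simpa using nonZeroDivisors.ne_zero ht
        refine ⟨a * algebraMap D K t, mul_ne_zero ha ht0, ?_⟩
        rintro y (hy | ⟨y, hy, rfl⟩)
        · convert InD.map_mul t (h y hy) using 1; ring
        · convert InD.map_mul s (h y hy) using 1; field_simp)
    refine ⟨a, fun y hy => ⟨ha y (Or.inl hy), ?_⟩, ?_, by simp⟩
    · convert ha _ (Or.inr ⟨y, hy, rfl⟩) using 1; ring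
    · rcases hy with hy | ⟨y, hy, rfl⟩
      · refine absurd ?_ hya
        convert ha _ (Or.inr ⟨y, hy, rfl⟩) using 1; ring
      · exact ⟨y, hy, by convert hya using 2; ring⟩
  | insert Q S hQS ih =>
    intro hS
    obtain ⟨a, ha, ⟨y1, hy1, hy1'⟩, haS⟩ := ih (fun Q' h => hS Q' (Finset.mem_insert_of_mem h))
    obtain ⟨hQ, hQP⟩ := hS Q (Finset.mem_insert_self _ _)
    by_cases hex : ∃ y ∈ I, ∃ d : D, d ∉ Q ∧ algebraMap D K d = a * y
    · refine ⟨a, ha, ⟨y1, hy1, hy1'⟩, ?_⟩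
      intro Q' hQ'
      rcases Finset.mem_insert.1 hQ' with rfl | h
      · exact hex
      · exact haS _ h
    push Not at hex
    have hPQ : ¬ colI D w ≤ Q := fun h => hQP (hP.eq_of_le hQ h).symm
    obtain ⟨p, hp, hpQ⟩ := SetLike.not_le_iff_exists.1 hPQ
    have hinf : ¬ (insert (colI D w) S).inf id ≤ Q := by
      intro h
      obtain ⟨Q', hQ', hle⟩ := (hQ.prime.inf_le').1 h
      rcases Finset.mem_insert.1 hQ' with rfl | h'
      · exact hPQ hle
      · have := (hS Q' (Finset.mem_insert_of_mem h')).1.eq_of_le hQ hle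
        exact hQS (this ▸ h')
    obtain ⟨d, hd, hdQ⟩ := SetLike.not_le_iff_exists.1 hinf
    rw [Submodule.mem_finsetInf] at hd
    have hdP : d ∈ colI D w := hd _ (Finset.mem_insert_self _ _)
    have hdS : ∀ Q' ∈ S, d ∈ Q' := fun Q' h => hd _ (Finset.mem_insert_of_mem h)
    have hQ2 := hQ
    obtain ⟨u, hu, hQu, -⟩ := hQ2
    obtain ⟨a2, ha2, y0, hy0, hy0'⟩ := exists_not_mem hD u hu I hI0 hI1
    have hpw := mem_colI.1 hp
    have hdw := mem_colI.1 hdP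
    refine ⟨a + algebraMap D K (p * d) * a2, fun y hy => ⟨?_, ?_⟩, ⟨y1, hy1, ?_⟩, ?_⟩
    · convert (ha y hy).1.add (InD.map_mul (p * d) (ha2 y hy)) using 1; ring
    · convert (ha y hy).2.add (InD.map_mul d (hpw.mul (ha2 y hy))) using 1
      rw [map_mul]; ring
    · intro h
      apply hy1'
      have h2 := InD.map_mul (-1 : D) (hdw.mul (hpw.mul (ha2 y1 hy1)))
      convert h.add h2 using 1
      simp only [map_mul, map_neg, map_one]; ring
    · intro Q' hQ'
      rcases Finset.mem_insert.1 hQ' with rfl | h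
      · obtain ⟨r, hr⟩ := (ha y0 hy0).1
        obtain ⟨s, hs⟩ := ha2 y0 hy0
        have hsQ : s ∉ Q' := by
          rw [hQu, mem_colI, hs]; exact hy0'
        have hrQ : r ∈ Q' := by
          by_contra hc
          exact hex y0 hy0 r hc hr
        refine ⟨y0, hy0, r + p * d * s, ?_, by simp only [map_add, map_mul, hr, hs]; ring⟩
        rw [Ideal.add_mem_iff_right _ hrQ]
        have := hQ.prime
        intro hc
        rcases this.mem_or_mem hc with hc | hc
        · exact (this.mem_or_mem hc).elim hpQ hdQ
        · exact hsQ hc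
      · obtain ⟨y, hy, r, hr, hre⟩ := haS Q' h
        obtain ⟨s, hs⟩ := ha2 y hy
        refine ⟨y, hy, r + p * d * s, ?_, by simp only [map_add, map_mul, hre, hs]; ring⟩
        rwa [Ideal.add_mem_iff_left]
        exact Q'.mul_mem_right _ (Q'.mul_mem_left _ (hdS Q' h))

end helpers

/-- **Lemma (first part).** Let `D` be a Krull domain with quotient field `K ≠ D` and `I`
a nonzero divisorial fractional ideal of `D`. Then there exist `a, b ∈ K` and a height-one
prime `P` of `D` such that `I⁻¹ = (aD + bD)_v` and `v_P(a/b) = 1`. -/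
theorem approximation_lemma {D K : Type*} [CommRing D] [IsDomain D] [Field K] [Algebra D K]
    [IsFractionRing D K]
    (hD : IsKrullDomain D) (hDK : ¬ Function.Surjective (algebraMap D K))
    (I : FractionalIdeal D⁰ K) (hI0 : I ≠ 0) (hIv : divClosure I = I) :
    ∃ (a b : K) (P : Ideal D), IsHeightOnePrime P ∧
      1 / I = divClosure (FractionalIdeal.spanSingleton D⁰ a ⊔
        FractionalIdeal.spanSingleton D⁰ b) ∧
      valOneAt D P (a / b) := by
  classical
  obtain ⟨w0, hw0⟩ : ∃ w0 : K, ¬ InD D w0 := by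
    by_contra! h
    exact hDK h
  obtain ⟨P, hP, -⟩ := exists_maxC hD w0 hw0
  have hP2 := hP
  obtain ⟨w, hw, rfl, -⟩ := hP2
  have hI0' : ∃ y ∈ (I : Set K), y ≠ 0 := by
    by_contra! h
    exact hI0 (FractionalIdeal.eq_zero_iff.2 h)
  have hI1 : ∃ a : K, a ≠ 0 ∧ ∀ y ∈ (I : Set K), InD D (a * y) := by
    obtain ⟨d, hd, h⟩ := I.isFractional
    refine ⟨algebraMap D K d, by simpa using nonZeroDivisors.ne_zero hd, fun y hy => ?_⟩
    obtain ⟨r, hr⟩ := h y hy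
    exact ⟨r, by rw [hr, Algebra.smul_def]⟩
  obtain ⟨b, hb, y0, hy0, hy0'⟩ := exists_not_mem hD w hw I hI0' hI1
  obtain ⟨s, hs⟩ := hb y0 hy0
  have hsP : s ∉ colI D w := by rw [mem_colI, hs]; exact hy0'
  have hs0 : s ≠ 0 := by rintro rfl; exact hsP (zero_mem _)
  have hb0 : b ≠ 0 := by
    rintro rfl
    apply hs0
    apply IsFractionRing.injective D K
    rw [hs]; simp
  have hfin := finite_maxC (K := K) hD s hs0
  obtain ⟨a, ha, ⟨y1, hy1, hy1'⟩, haS⟩ := main_induct hD I hI0' hI1 w hw hP hfin.toFinset (by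
    intro Q hQ
    rw [Set.Finite.mem_toFinset] at hQ
    exact ⟨hQ.1, fun h => hsP (h ▸ hQ.2)⟩)
  refine ⟨a, b, colI D w, hP.heightOne hD, ?_, ?_, ?_⟩
  · unfold divClosure
    congr 1
    have hJ0 : 1 / I ≠ 0 := by
      intro h
      have hbm : b ∈ 1 / I := by
        rw [FractionalIdeal.mem_div_iff_of_ne_zero hI0]
        intro y hy
        rw [← inD_iff_mem_one]; exact hb y hy
      rw [h, FractionalIdeal.mem_zero_iff] at hbm
      exact hb0 hbm
    have hma : a ∈ FractionalIdeal.spanSingleton D⁰ a ⊔ FractionalIdeal.spanSingleton D⁰ b :=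
      (le_sup_left : FractionalIdeal.spanSingleton D⁰ a ≤ _)
        (FractionalIdeal.mem_spanSingleton_self D⁰ a)
    have hmb : b ∈ FractionalIdeal.spanSingleton D⁰ a ⊔ FractionalIdeal.spanSingleton D⁰ b :=
      (le_sup_right : FractionalIdeal.spanSingleton D⁰ b ≤ _)
        (FractionalIdeal.mem_spanSingleton_self D⁰ b)
    have hab0 : FractionalIdeal.spanSingleton D⁰ a ⊔ FractionalIdeal.spanSingleton D⁰ b ≠ 0 := by
      intro h
      rw [h, FractionalIdeal.mem_zero_iff] at hmb
      exact hb0 hmb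
    apply le_antisymm
    · intro x hx
      rw [FractionalIdeal.mem_div_iff_of_ne_zero hab0]
      have hle : FractionalIdeal.spanSingleton D⁰ a ⊔ FractionalIdeal.spanSingleton D⁰ b
          ≤ 1 / I := by
        apply sup_le
        · rw [FractionalIdeal.spanSingleton_le_iff_mem,
            FractionalIdeal.mem_div_iff_of_ne_zero hI0]
          intro y hy
          rw [← inD_iff_mem_one]; exact (ha y hy).1
        · rw [FractionalIdeal.spanSingleton_le_iff_mem,
            FractionalIdeal.mem_div_iff_of_ne_zero hI0]
          intro y hy
          rw [← inD_iff_mem_one]; exact hb y hy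
      intro y hy
      have := hle hy
      rw [FractionalIdeal.mem_div_iff_of_ne_zero hI0] at this
      rw [mul_comm]; exact this x hx
    · intro x hx
      rw [FractionalIdeal.mem_div_iff_of_ne_zero hab0] at hx
      have hxa := inD_iff_mem_one.2 (hx a hma)
      have hxb := inD_iff_mem_one.2 (hx b hmb)
      rw [← hIv]
      unfold divClosure
      rw [FractionalIdeal.mem_div_iff_of_ne_zero hJ0]
      intro y hy
      rw [FractionalIdeal.mem_div_iff_of_ne_zero hI0] at hy
      rw [← inD_iff_mem_one]
      by_contra hxy
      obtain ⟨Q, hQ, hle⟩ := exists_maxC hD (x * y) hxy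
      have hsQ : s ∈ Q := by
        apply hle
        rw [mem_colI, hs]
        convert hxb.mul (inD_iff_mem_one.2 (hy y0 hy0)) using 1; ring
      obtain ⟨z, hz, d, hdQ, hd⟩ := haS Q ((Set.Finite.mem_toFinset _).2 ⟨hQ, hsQ⟩)
      apply hdQ
      apply hle
      rw [mem_colI, hd]
      convert hxa.mul (inD_iff_mem_one.2 (hy z hz)) using 1; ring
  · obtain ⟨h1, h2⟩ := ha y0 hy0
    obtain ⟨p, hp⟩ := h1
    refine ⟨p, by rw [mem_colI, hp]; exact h2, s, hsP, ?_⟩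
    rw [hs, hp]; field_simp
  · rintro ⟨x, ⟨p1, hp1, s1, hs1, hx⟩, z, ⟨p2, hp2, s2, hs2, hz⟩, hxz⟩
    obtain ⟨m, hm⟩ := (ha y1 hy1).2
    have hmP : m ∉ colI D w := by rw [mem_colI, hm]; exact hy1'
    obtain ⟨t, ht⟩ := hb y1 hy1
    obtain ⟨v, hv⟩ := mem_colI.1 hp1
    have haxz : a = x * z * b := by rw [← hxz]; field_simp
    have : s1 * s2 * m = v * t * p2 := by
      apply IsFractionRing.injective D K
      simp only [map_mul]
      rw [hm, hv, ht, ← hx, ← hz, haxz]; ring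
    have hpr := hP.prime
    have hmem : s1 * s2 * m ∈ colI D w := this ▸ Ideal.mul_mem_left _ _ hp2
    rcases hpr.mem_or_mem hmem with h | h
    · exact (hpr.mem_or_mem h).elim hs1 hs2
    · exact hmP h

end
end

section
/- Let D be a Krull domain with quotient field K ≠ D that is not semi-local (i.e., D has infinitely many height-one prime ideals), and let I be a nonzero divisorial (fractional) ideal of D. Then there exist infinitely many height-one prime ideals P of D such that there exist a, b ∈ K with I^{-1} = (aD + bD)_v and v_P(a/b) = 1. -/
open scoped nonZeroDivisors

noncomputable section

namespace KrullAux
open FractionalIdeal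

variable {D K : Type*} [CommRing D] [IsDomain D] [Field K] [Algebra D K] [IsFractionRing D K]

lemma one_div_ne {A : FractionalIdeal D⁰ K} (hA : A ≠ 0) : 1 / A ≠ 0 := by
  rw [← FractionalIdeal.inv_eq]
  intro h
  have := bot_lt_mul_inv (I := A) hA
  rw [h, mul_zero] at this
  exact lt_irrefl _ this

lemma mul_ne {A B : FractionalIdeal D⁰ K} (hA : A ≠ 0) (hB : B ≠ 0) : A * B ≠ 0 := by
  obtain ⟨x, hx, hx0⟩ : ∃ x ∈ A, x ≠ 0 := by
    by_contra! hh
    exact hA (eq_zero_iff.2 hh)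
  obtain ⟨y, hy, hy0⟩ : ∃ y ∈ B, y ≠ 0 := by
    by_contra! hh
    exact hB (eq_zero_iff.2 hh)
  intro h
  exact mul_ne_zero hx0 hy0 (eq_zero_iff.1 h _ (mul_mem_mul hx hy))

lemma ne_of_le {A B : FractionalIdeal D⁰ K} (hA : A ≠ 0) (h : A ≤ B) : B ≠ 0 := by
  rintro rfl
  exact hA (le_antisymm h (zero_le _))

lemma le_inv {A B : FractionalIdeal D⁰ K} (hB : B ≠ 0) : A ≤ 1 / B ↔ A * B ≤ 1 :=
  le_div_iff_mul_le hB

lemma inv_mul_le {A : FractionalIdeal D⁰ K} (hA : A ≠ 0) : 1 / A * A ≤ 1 :=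
  (le_inv hA).1 le_rfl

lemma anti {A B : FractionalIdeal D⁰ K} (hA : A ≠ 0) (h : A ≤ B) : 1 / B ≤ 1 / A := by
  rw [le_inv hA]
  exact (mul_le_mul_right h _).trans (inv_mul_le (ne_of_le hA h))

lemma le_v {A : FractionalIdeal D⁰ K} (hA : A ≠ 0) : A ≤ divClosure A := by
  unfold divClosure
  rw [le_inv (one_div_ne hA), mul_comm]
  exact inv_mul_le hA

lemma v_ne {A : FractionalIdeal D⁰ K} (hA : A ≠ 0) : divClosure A ≠ 0 :=
  one_div_ne (one_div_ne hA)

lemma v_mono {A B : FractionalIdeal D⁰ K} (hA : A ≠ 0) (h : A ≤ B) :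
    divClosure A ≤ divClosure B :=
  anti (one_div_ne (ne_of_le hA h)) (anti hA h)

lemma v_inv {A : FractionalIdeal D⁰ K} (hA : A ≠ 0) : divClosure (1 / A) = 1 / A :=
  le_antisymm (anti hA (le_v hA)) (le_v (one_div_ne hA))

lemma v_idem {A : FractionalIdeal D⁰ K} (hA : A ≠ 0) : divClosure (divClosure A) = divClosure A :=
  v_inv (one_div_ne hA)

lemma inv_v {A : FractionalIdeal D⁰ K} (hA : A ≠ 0) : 1 / divClosure A = 1 / A := v_inv hA

lemma v_mul_le {A B : FractionalIdeal D⁰ K} (hA : A ≠ 0) (hB : B ≠ 0) :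
    divClosure A * B ≤ divClosure (A * B) := by
  have h1 : B * (1 / (A * B)) ≤ 1 / A := by
    rw [le_inv hA]
    have := inv_mul_le (mul_ne hA hB)
    calc B * (1 / (A * B)) * A = 1 / (A * B) * (A * B) := by ring
      _ ≤ 1 := this
  have h2 : divClosure A * (1 / A) ≤ 1 := inv_mul_le (one_div_ne hA)
  unfold divClosure at *
  rw [le_inv (one_div_ne (mul_ne hA hB)), mul_assoc]
  exact (mul_le_mul_right h1 _).trans h2

lemma one_div_one' : (1 : FractionalIdeal D⁰ K) / 1 = 1 := by
  exact div_one
lemma v_one : divClosure (1 : FractionalIdeal D⁰ K) = 1 := by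
  unfold divClosure; rw [one_div_one', one_div_one']

lemma v_le {A B : FractionalIdeal D⁰ K} (hA : A ≠ 0) (h : A ≤ B) (hB : divClosure B = B) :
    divClosure A ≤ B := (v_mono hA h).trans hB.le

/-- Complete integral closedness, in K. -/
def CIC (D K : Type*) [CommRing D] [Field K] [Algebra D K] : Prop :=
  ∀ x : K, (∃ c : D, c ≠ 0 ∧ ∀ n : ℕ,
    IsLocalization.IsInteger D (algebraMap D K c * x ^ n)) → IsLocalization.IsInteger D x

/-- Integral divisorial ideals. -/
abbrev DivI (D K : Type*) [CommRing D] [IsDomain D] [Field K] [Algebra D K]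
    [IsFractionRing D K] :=
  {A : Ideal D // divClosure (A : FractionalIdeal D⁰ K) = (A : FractionalIdeal D⁰ K)}

lemma cic_of (h : IsKrullDomain D) : CIC D K := by
  rintro x ⟨c, hc, hx⟩
  let e := FractionRing.algEquiv D K
  have := h.1 (e.symm x) ⟨c, hc, fun n => by
    obtain ⟨d, hd⟩ := hx n
    refine ⟨d, ?_⟩
    apply e.injective
    simp [hd]⟩
  obtain ⟨d, hd⟩ := this
  refine ⟨d, ?_⟩
  apply e.symm.injective
  simp [← hd]

lemma acc_of (h : IsKrullDomain D) : WellFoundedGT (DivI D K) := by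
  rw [wellFoundedGT_iff_monotone_chain_condition]
  intro f
  let e := (FractionRing.algEquiv D K).symm
  obtain ⟨n, hn⟩ := h.2 (fun n => (f n).1) (fun n => by
    have := congrArg (FractionalIdeal.map (e : K →ₐ[D] FractionRing D)) (f n).2
    unfold divClosure at this ⊢
    rw [map_one_div, map_one_div, map_coeIdeal] at this
    exact this) (fun n => f.monotone (Nat.le_succ n))
  exact ⟨n, fun m hm => Subtype.ext (hn m hm).symm⟩

/-- An `A`-stable multiplier is integral. -/
lemma stable (hc : CIC D K) {A : FractionalIdeal D⁰ K} (hA : A ≠ 0) {B : FractionalIdeal D⁰ K}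
    (h : B * A ≤ A) : B ≤ 1 := by
  intro x hx
  obtain ⟨y, hy, hy0⟩ : ∃ y ∈ A, y ≠ 0 := by
    by_contra! hh
    exact hA (eq_zero_iff.2 hh)
  have hpow : ∀ n : ℕ, x ^ n * y ∈ A := by
    intro n
    induction n with
    | zero => simpa using hy
    | succ n ih =>
      have := h (mul_mem_mul hx ih)
      rwa [← mul_assoc, ← pow_succ'] at this
  obtain ⟨z, hz, hz0⟩ : ∃ z ∈ 1 / A, z ≠ 0 := by
    by_contra! hh
    exact one_div_ne hA (eq_zero_iff.2 hh)
  have h1 : ∀ n : ℕ, ∃ d : D, algebraMap D K d = z * y * x ^ n := by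
    intro n
    have := inv_mul_le hA (mul_mem_mul hz (hpow n))
    obtain ⟨d, hd⟩ := (mem_one_iff _).1 this
    exact ⟨d, by rw [hd]; ring⟩
  obtain ⟨c, hcc⟩ := h1 0
  have := hc x ⟨c, by
    rintro rfl
    simp [hz0, hy0] at hcc, fun n => by
      obtain ⟨d, hd⟩ := h1 n
      exact ⟨d, by rw [hd, hcc]; ring⟩⟩
  obtain ⟨d, hd⟩ := this
  exact (mem_one_iff _).2 ⟨d, hd⟩

lemma inv_mul_inv (hc : CIC D K) {A : FractionalIdeal D⁰ K} (hA : A ≠ 0) :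
    1 / (A * (1 / A)) ≤ 1 := by
  apply stable hc (one_div_ne hA)
  rw [le_inv hA]
  calc _ = 1 / (A * (1 / A)) * (A * (1 / A)) := by ring
    _ ≤ 1 := inv_mul_le (mul_ne hA (one_div_ne hA))

/-- Maximal proper divisorial ideals. -/
structure MaxDiv (K : Type*) [Field K] [Algebra D K] [IsFractionRing D K] (Q : Ideal D) : Prop where
  nb : Q ≠ ⊥
  nt : Q ≠ ⊤
  dv : divClosure (Q : FractionalIdeal D⁰ K) = (Q : FractionalIdeal D⁰ K)
  mx : ∀ B : Ideal D, divClosure (B : FractionalIdeal D⁰ K) = (B : FractionalIdeal D⁰ K) →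
    Q ≤ B → B ≠ ⊤ → B = Q

lemma exists_max (hacc : WellFoundedGT (DivI D K)) (A : Ideal D) (hA0 : A ≠ ⊥) (hA1 : A ≠ ⊤)
    (hA : divClosure (A : FractionalIdeal D⁰ K) = (A : FractionalIdeal D⁰ K)) :
    ∃ Q, MaxDiv K Q ∧ A ≤ Q := by
  obtain ⟨Q, ⟨hAQ, hQ1⟩, hm⟩ := hacc.wf.has_min
    {B : DivI D K | A ≤ B.1 ∧ B.1 ≠ ⊤} ⟨⟨A, hA⟩, le_rfl, hA1⟩
  refine ⟨Q.1, ⟨?_, hQ1, Q.2, ?_⟩, hAQ⟩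
  · intro h
    rw [h] at hAQ
    exact hA0 (le_bot_iff.1 hAQ)
  · intro B hB hQB hB1
    by_contra hne
    exact hm ⟨B, hB⟩ ⟨hAQ.trans hQB, hB1⟩ (lt_of_le_of_ne hQB (fun h => hne (congrArg Subtype.val h).symm))

lemma coe_ne {Q : Ideal D} (h : Q ≠ ⊥) : (Q : FractionalIdeal D⁰ K) ≠ 0 := coeIdeal_ne_zero.2 h

/-- ideal version of the closure -/
lemma exists_ideal_v {A : FractionalIdeal D⁰ K} (hA : A ≠ 0) (h1 : A ≤ 1) :
    ∃ B : Ideal D, (B : FractionalIdeal D⁰ K) = divClosure A :=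
  le_one_iff_exists_coeIdeal.1 (v_le hA h1 v_one)

lemma MaxDiv.prime {Q : Ideal D} (hQ : MaxDiv K Q) : Q.IsPrime := by
  refine ⟨hQ.nt, fun {x y} hxy => ?_⟩
  by_contra! hh
  obtain ⟨hx, hy⟩ := hh
  have hy0 : y ≠ 0 := by rintro rfl; exact hy (zero_mem _)
  set A : Ideal D := Q ⊔ Ideal.span {x} with hAdef
  have hA0 : A ≠ ⊥ := fun h => hQ.nb (le_bot_iff.1 (h ▸ le_sup_left))
  obtain ⟨B, hB⟩ := exists_ideal_v (coe_ne (K := K) hA0) coeIdeal_le_one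
  have hAB : A ≤ B := by
    rw [← coeIdeal_le_coeIdeal K, hB]; exact le_v (coe_ne hA0)
  have hBt : B = ⊤ := by
    by_contra hne
    have := hQ.mx B (by rw [hB]; exact v_idem (coe_ne hA0)) (le_sup_left.trans hAB) hne
    rw [this] at hAB
    exact hx (hAB (Ideal.mem_sup_right (Ideal.mem_span_singleton_self x)))
  have hs : (Ideal.span {y} : Ideal D) ≠ ⊥ := by simpa using hy0
  have hAy : A * Ideal.span {y} ≤ Q := by
    rw [hAdef, Ideal.sup_mul, sup_le_iff]
    refine ⟨Ideal.mul_le_left, ?_⟩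
    rw [Ideal.span_singleton_mul_span_singleton, Ideal.span_singleton_le_iff_mem]
    exact hxy
  have h1 := v_mul_le (coe_ne (K := K) hA0) (coe_ne (K := K) hs)
  rw [← hB, hBt, coeIdeal_top, one_mul, ← coeIdeal_mul] at h1
  have h2 := h1.trans (v_le (coe_ne (mul_ne_zero hA0 hs)) ((coeIdeal_le_coeIdeal K).2 hAy) hQ.dv)
  rw [coeIdeal_le_coeIdeal, Ideal.span_singleton_le_iff_mem] at h2
  exact hy h2

lemma MaxDiv.not_inv_le {Q : Ideal D} (hQ : MaxDiv K Q) :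
    ¬ 1 / (Q : FractionalIdeal D⁰ K) ≤ 1 := by
  intro h
  have h1 := anti (one_div_ne (coe_ne (K := K) hQ.nb)) h
  rw [one_div_one'] at h1
  have h2 : 1 ≤ (Q : FractionalIdeal D⁰ K) := h1.trans hQ.dv.le
  rw [← coeIdeal_top, coeIdeal_le_coeIdeal] at h2
  exact hQ.nt (top_le_iff.1 h2)

/-- `A * A⁻¹` is in no maximal divisorial ideal -/
lemma MaxDiv.not_le (hc : CIC D K) {Q : Ideal D} (hQ : MaxDiv K Q) {A : FractionalIdeal D⁰ K}
    (hA : A ≠ 0) : ¬ A * (1 / A) ≤ (Q : FractionalIdeal D⁰ K) := fun h =>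
  hQ.not_inv_le ((anti (mul_ne hA (one_div_ne hA)) h).trans (inv_mul_inv hc hA))

lemma prod_le (hc : CIC D K) (hacc : WellFoundedGT (DivI D K)) (A : DivI D K) (hA : A.1 ≠ ⊥) :
    ∃ s : Multiset (Ideal D), (∀ Q ∈ s, MaxDiv K Q) ∧ s.prod ≤ A.1 := by
  induction A using hacc.wf.induction with
  | _ A ih =>
  by_cases hA1 : A.1 = ⊤
  · exact ⟨0, by simp, by simp [hA1]⟩
  obtain ⟨Q, hQ, hAQ⟩ := exists_max hacc A.1 hA hA1 A.2
  have hA' := coe_ne (K := K) hA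
  have hQ' := coe_ne (K := K) hQ.nb
  have hQi := one_div_ne hQ'
  have hle : (A.1 : FractionalIdeal D⁰ K) * (1 / (Q : FractionalIdeal D⁰ K)) ≤ 1 := by
    rw [mul_comm]
    exact (mul_le_mul_right ((coeIdeal_le_coeIdeal K).2 hAQ) _).trans (inv_mul_le hQ')
  obtain ⟨B, hB⟩ := exists_ideal_v (mul_ne hA' hQi) hle
  have h1 : (1 : FractionalIdeal D⁰ K) ≤ 1 / (Q : FractionalIdeal D⁰ K) := by
    rw [le_inv hQ', one_mul]; exact coeIdeal_le_one
  have hAB : A.1 ≤ B := by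
    rw [← coeIdeal_le_coeIdeal K, hB]
    refine le_trans ?_ (le_v (mul_ne hA' hQi))
    simpa using mul_le_mul_right h1 (A.1 : FractionalIdeal D⁰ K)
  have hne : A.1 ≠ B := by
    intro h
    apply hQ.not_inv_le
    apply stable hc hA'
    rw [mul_comm]
    refine (le_v (mul_ne hA' hQi)).trans ?_
    rw [← hB, ← h]
  obtain ⟨s, hs, hsB⟩ := ih ⟨B, by rw [hB]; exact v_idem (mul_ne hA' hQi)⟩
    (lt_of_le_of_ne hAB (fun h => hne (congrArg Subtype.val h)))
    (fun h => hA (le_bot_iff.1 (h ▸ hAB)))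
  refine ⟨Q ::ₘ s, ?_, ?_⟩
  · intro R hR
    rcases Multiset.mem_cons.1 hR with rfl | hR
    · exact hQ
    · exact hs R hR
  · rw [Multiset.prod_cons, mul_comm]
    refine (Ideal.mul_mono_left hsB).trans ?_
    rw [← coeIdeal_le_coeIdeal K, coeIdeal_mul, hB]
    refine (v_mul_le (mul_ne hA' hQi) hQ').trans (v_le (mul_ne (mul_ne hA' hQi) hQ') ?_ A.2)
    rw [mul_assoc]
    simpa using mul_le_mul_right (inv_mul_le hQ') (A.1 : FractionalIdeal D⁰ K)

/-- every nonzero integral ideal lies in finitely many maximal divisorial ideals -/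
lemma finite_max (hc : CIC D K) (hacc : WellFoundedGT (DivI D K)) {A : FractionalIdeal D⁰ K}
    (hA : A ≠ 0) (hA1 : A ≤ 1) : {Q : Ideal D | MaxDiv K Q ∧ A ≤ Q}.Finite := by
  obtain ⟨B, hB⟩ := exists_ideal_v hA hA1
  have hB0 : B ≠ ⊥ := by
    rw [← coeIdeal_ne_zero (K := K), hB]; exact v_ne hA
  obtain ⟨s, hs, hsB⟩ := prod_le hc hacc ⟨B, by rw [hB]; exact v_idem hA⟩ hB0
  classical
  refine (s.toFinset.finite_toSet).subset ?_
  rintro Q ⟨hQ, hAQ⟩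
  have hBQ : B ≤ Q := by
    rw [← coeIdeal_le_coeIdeal K, hB]; exact v_le hA hAQ hQ.dv
  obtain ⟨R, hR, hRQ⟩ := (Ideal.IsPrime.multiset_prod_le hQ.prime).1 (hsB.trans hBQ)
  have := (hs R hR).mx Q hQ.dv hRQ hQ.nt
  subst this
  simpa using hR

lemma v_span_singleton {x : D} (hx : x ≠ 0) :
    divClosure ((Ideal.span {x} : Ideal D) : FractionalIdeal D⁰ K) = (Ideal.span {x} : Ideal D) := by
  have hx' : algebraMap D K x ≠ 0 := by simpa using hx
  unfold divClosure
  rw [coeIdeal_span_singleton, one_div_spanSingleton, one_div_spanSingleton, inv_inv]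

lemma maxDiv_of_height (hc : CIC D K) (hacc : WellFoundedGT (DivI D K)) {P : Ideal D}
    (hP : IsHeightOnePrime P) : MaxDiv K P := by
  obtain ⟨hp, hb, hm⟩ := hP
  obtain ⟨x, hx, hx0⟩ := Submodule.exists_mem_ne_zero_of_ne_bot hb
  obtain ⟨s, hs, hsB⟩ := prod_le hc hacc ⟨Ideal.span {x}, v_span_singleton hx0⟩ (by simpa using hx0)
  obtain ⟨R, hR, hRQ⟩ := (Ideal.IsPrime.multiset_prod_le hp).1
    (hsB.trans ((Ideal.span_singleton_le_iff_mem _).2 hx))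
  have := hm R (hs R hR).prime (hs R hR).nb hRQ
  subst this
  exact hs R hR

lemma mem_inv {A : FractionalIdeal D⁰ K} (hA : A ≠ 0) {x : K} :
    x ∈ 1 / A ↔ ∀ y ∈ A, x * y ∈ (1 : FractionalIdeal D⁰ K) := mem_div_iff_of_ne_zero hA

lemma smul_mem' {A : FractionalIdeal D⁰ K} (d : D) {x : K} (hx : x ∈ A) :
    algebraMap D K d * x ∈ A := by
  rw [← Algebra.smul_def]
  exact Submodule.smul_mem (A : Submodule D K) d hx

lemma mem_coe {Q : Ideal D} {d : D} :
    algebraMap D K d ∈ (Q : FractionalIdeal D⁰ K) ↔ d ∈ Q := by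
  refine ⟨fun h => ?_, mem_coeIdeal_of_mem _⟩
  obtain ⟨e, he, hed⟩ := (mem_coeIdeal _).1 h
  rwa [← IsFractionRing.injective D K hed]

lemma exists_not (hc : CIC D K) {Q : Ideal D} (hQ : MaxDiv K Q) {A : FractionalIdeal D⁰ K}
    (hA : A ≠ 0) : ∃ a ∈ 1 / A, ∃ t ∈ A, a * t ∉ (Q : FractionalIdeal D⁰ K) := by
  by_contra! h
  apply hQ.not_le hc hA
  rw [mul_comm]
  exact FractionalIdeal.mul_le.2 h

lemma exists_b (hc : CIC D K) {I : FractionalIdeal D⁰ K} (hI : I ≠ 0) (S : Finset (Ideal D))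
    (hS : ∀ Q ∈ S, MaxDiv K Q) :
    ∃ b ∈ 1 / I, ∀ Q ∈ S, ∃ i ∈ I, b * i ∉ (Q : FractionalIdeal D⁰ K) := by
  classical
  have h1 : ∀ Q : Ideal D, ∃ y ∈ 1 / I, Q ∈ S → ∃ i ∈ I, y * i ∉ (Q : FractionalIdeal D⁰ K) := by
    intro Q
    by_cases hQ : Q ∈ S
    · obtain ⟨y, hy, i, hi, h⟩ := exists_not hc (hS Q hQ) hI
      exact ⟨y, hy, fun _ => ⟨i, hi, h⟩⟩
    · exact ⟨0, zero_mem _, fun h => absurd h hQ⟩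
  choose y hy hyi using h1
  have h2 : ∀ Q : Ideal D, ∃ t : D, Q ∈ S → t ∉ Q ∧ ∀ R ∈ S, R ≠ Q → t ∈ R := by
    intro Q
    by_cases hQ : Q ∈ S
    · have : ¬ (∏ R ∈ S.erase Q, R) ≤ Q := by
        intro h
        obtain ⟨R, hR, hRQ⟩ := (Ideal.IsPrime.prod_le (hS Q hQ).prime).1 h
        rw [Finset.mem_erase] at hR
        exact hR.1 ((hS R hR.2).mx Q (hS Q hQ).dv hRQ (hS Q hQ).nt).symm
      obtain ⟨t, ht, htQ⟩ := SetLike.not_le_iff_exists.1 this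
      refine ⟨t, fun _ => ⟨htQ, fun R hR hne => ?_⟩⟩
      exact (Ideal.prod_le_inf.trans (Finset.inf_le (Finset.mem_erase.2 ⟨hne, hR⟩))) ht
    · exact ⟨0, fun h => absurd h hQ⟩
  choose t ht using h2
  refine ⟨∑ Q ∈ S, algebraMap D K (t Q) * y Q, ?_, ?_⟩
  · exact Submodule.sum_mem ((1 / I : FractionalIdeal D⁰ K) : Submodule D K)
      (fun Q _ => smul_mem' (t Q) (hy Q))
  · intro Q hQ
    obtain ⟨i, hi, hn⟩ := hyi Q hQ
    refine ⟨i, hi, fun hmem => ?_⟩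
    rw [Finset.sum_mul, ← Finset.add_sum_erase S _ hQ] at hmem
    have hint : ∀ R, ∃ d : D, algebraMap D K d = y R * i := fun R =>
      (mem_one_iff _).1 ((mem_inv hI).1 (hy R) i hi)
    have h3 : ∑ R ∈ S.erase Q, algebraMap D K (t R) * y R * i ∈ (Q : FractionalIdeal D⁰ K) := by
      refine Submodule.sum_mem ((Q : FractionalIdeal D⁰ K) : Submodule D K) (fun R hR => ?_)
      rw [Finset.mem_erase] at hR
      obtain ⟨d, hd⟩ := hint R
      rw [mul_assoc, ← hd, ← map_mul]
      exact mem_coe.2 (Ideal.mul_mem_right _ _ ((ht R hR.2).2 Q hQ hR.1.symm))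
    have h4 := (Submodule.add_mem_iff_left ((Q : FractionalIdeal D⁰ K) : Submodule D K) h3).1 hmem
    obtain ⟨d, hd⟩ := hint Q
    rw [mul_assoc, ← hd, ← map_mul] at h4
    rw [← hd] at hn
    rcases (hS Q hQ).prime.mem_or_mem (mem_coe.1 h4) with h | h
    · exact (ht Q hQ).1 h
    · exact hn (mem_coe.2 h)

lemma main (hc : CIC D K) (hacc : WellFoundedGT (DivI D K)) {P : Ideal D} (hP : MaxDiv K P)
    {I : FractionalIdeal D⁰ K} (hI : I ≠ 0) :
    ∃ a b : K, 1 / I = divClosure (FractionalIdeal.spanSingleton D⁰ a ⊔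
        FractionalIdeal.spanSingleton D⁰ b) ∧ valOneAt D P (a / b) := by
  have hP0 := coe_ne (K := K) hP.nb
  have hPi := one_div_ne hP0
  have hprime := hP.prime
  obtain ⟨a, ha, t, ht, hat⟩ := exists_not hc hP (mul_ne hI hPi)
  have ha0 : a ≠ 0 := by
    rintro rfl
    rw [zero_mul] at hat
    exact hat (zero_mem _)
  have haI : ∀ i ∈ I, a * i ∈ (P : FractionalIdeal D⁰ K) := by
    intro i hi
    rw [← hP.dv]
    refine (mem_inv hPi).2 fun p hp => ?_
    rw [mul_assoc]
    exact (mem_inv (mul_ne hI hPi)).1 ha _ (mul_mem_mul hi hp)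
  have haJ : a ∈ 1 / I := (mem_inv hI).2 fun i hi => coeIdeal_le_one (haI i hi)
  have hs0 : spanSingleton D⁰ a ≠ 0 := spanSingleton_ne_zero_iff.2 ha0
  have hsI : spanSingleton D⁰ a * I ≤ P := by
    rw [spanSingleton_mul_le_iff]; exact haI
  have hfin := finite_max hc hacc (mul_ne hs0 hI) (hsI.trans coeIdeal_le_one)
  obtain ⟨b, hb, hbS⟩ := exists_b hc hI hfin.toFinset (fun Q hQ => by
    simp at hQ; exact hQ.1)
  obtain ⟨i, hi, hbi⟩ := hbS P (by simpa using ⟨hP, hsI⟩)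
  have hb0 : b ≠ 0 := by
    rintro rfl
    rw [zero_mul] at hbi
    exact hbi (zero_mem _)
  have hi0 : i ≠ 0 := by
    rintro rfl
    rw [mul_zero] at hbi
    exact hbi (zero_mem _)
  refine ⟨a, b, ?_, ?_, ?_⟩
  · set G := spanSingleton D⁰ a ⊔ spanSingleton D⁰ b with hG
    have hG0 : G ≠ 0 := ne_of_le hs0 le_sup_left
    have hGJ : G ≤ 1 / I :=
      sup_le (spanSingleton_le_iff_mem.2 haJ) (spanSingleton_le_iff_mem.2 hb)
    have hGI : G * I ≤ 1 := (le_inv hI).1 hGJ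
    refine le_antisymm ?_ (v_le hG0 hGJ (v_inv hI))
    obtain ⟨B, hB⟩ := exists_ideal_v (mul_ne hG0 hI) hGI
    have hle := le_v (mul_ne hG0 hI)
    rw [← hB] at hle
    have hBt : B = ⊤ := by
      by_contra hne
      obtain ⟨Q, hQ, hBQ⟩ := exists_max (K := K) hacc B
        (by rw [← coeIdeal_ne_zero (K := K), hB]; exact v_ne (mul_ne hG0 hI)) hne
        (by rw [hB]; exact v_idem (mul_ne hG0 hI))
      have hle2 := hle.trans ((coeIdeal_le_coeIdeal K).2 hBQ)
      obtain ⟨j, hj, hbj⟩ := hbS Q (by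
        simp only [Set.Finite.mem_toFinset, Set.mem_setOf_eq]
        exact ⟨hQ, (mul_le_mul_left (le_sup_left) I).trans hle2⟩)
      exact hbj (hle2 (mul_mem_mul ((le_sup_right : _ ≤ G) (mem_spanSingleton_self _ b)) hj))
    have hJ := one_div_ne hI
    have h1 := v_mul_le (mul_ne hG0 hI) hJ
    rw [← hB, hBt, coeIdeal_top, one_mul] at h1
    refine h1.trans (v_mono (mul_ne (mul_ne hG0 hI) hJ) ?_)
    rw [mul_assoc, mul_comm I]
    simpa using mul_le_mul_right (inv_mul_le hI) G
  · obtain ⟨p, hp, hpa⟩ := (mem_coeIdeal _).1 (haI i hi)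
    obtain ⟨d, hd⟩ := (mem_one_iff _).1 ((mem_inv hI).1 hb i hi)
    refine ⟨p, hp, d, ?_, ?_⟩
    · rw [← hd] at hbi
      exact fun h => hbi (mem_coe.2 h)
    · rw [hpa, hd]; field_simp
  · rintro ⟨y, ⟨p1, hp1, s1, hs1, h1⟩, z, ⟨p2, hp2, s2, hs2, h2⟩, hyz⟩
    apply hat
    suffices h : spanSingleton D⁰ a * (I * (1 / (P : FractionalIdeal D⁰ K))) ≤ P from
      h (mul_mem_mul (mem_spanSingleton_self _ a) ht)
    rw [← mul_assoc, FractionalIdeal.mul_le]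
    intro w hw q hq
    obtain ⟨j, hj, rfl⟩ := mem_singleton_mul.1 hw
    obtain ⟨d, hd⟩ := (mem_one_iff _).1 ((mem_inv (mul_ne hI hPi)).1 ha _ (mul_mem_mul hj hq))
    obtain ⟨e, he⟩ := (mem_one_iff _).1 ((mem_inv hI).1 hb j hj)
    obtain ⟨f, hf⟩ := (mem_one_iff _).1 ((mem_inv hP0).1 hq _ (mem_coe.2 hp2))
    rw [mul_assoc, ← hd, mem_coe]
    have hab : a = b * (y * z) := by rw [← hyz]; field_simp
    have key : s1 * s2 * d = p1 * (e * f) := by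
      apply IsFractionRing.injective D K
      simp only [map_mul]
      rw [hd, he, hf, ← h1, ← h2, hab]; ring
    have hm : s1 * s2 * d ∈ P := key ▸ Ideal.mul_mem_right _ _ hp1
    rcases hprime.mem_or_mem hm with h | h
    · rcases hprime.mem_or_mem h with h | h
      · exact absurd h hs1
      · exact absurd h hs2
    · exact h

end KrullAux

/-- **Lemma (second part).** Let `D` be a Krull domain with quotient field `K ≠ D` that is
not semi-local (i.e. `D` has infinitely many height-one prime ideals), and `I` a nonzero
divisorial fractional ideal of `D`. Then there are infinitely many height-one primes `P`
of `D` for which there exist `a, b ∈ K` with `I⁻¹ = (aD + bD)_v` and `v_P(a/b) = 1`. -/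
theorem approximation_lemma_infinite {D K : Type*} [CommRing D] [IsDomain D] [Field K]
    [Algebra D K] [IsFractionRing D K]
    (hD : IsKrullDomain D) (hDK : ¬ Function.Surjective (algebraMap D K))
    (hinf : {P : Ideal D | IsHeightOnePrime P}.Infinite)
    (I : FractionalIdeal D⁰ K) (hI0 : I ≠ 0) (hIv : divClosure I = I) :
    {P : Ideal D | IsHeightOnePrime P ∧ ∃ a b : K,
      1 / I = divClosure (FractionalIdeal.spanSingleton D⁰ a ⊔
        FractionalIdeal.spanSingleton D⁰ b) ∧
      valOneAt D P (a / b)}.Infinite := by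
  refine hinf.mono fun P hP => ⟨hP, ?_⟩
  have hc := KrullAux.cic_of (K := K) hD
  have hacc := KrullAux.acc_of (K := K) hD
  exact KrullAux.main hc hacc (KrullAux.maxDiv_of_height hc hacc hP) hI0

end
end

section
/- Let S be a reduced, finitely generated, torsion-free, non-trivial Krull monoid whose quotient group G is a free abelian group of finite rank. Then there exists a ℤ-basis B of G such that B ∩ S ≠ ∅, i.e., G has a basis containing an element of S. -/
open scoped nonZeroDivisors

noncomputable section

theorem root_mem_aux {G : Type*} [AddCommGroup G] (S : AddSubmonoid G)
    (hq : ∀ x : G, ∃ a ∈ S, ∃ b ∈ S, x = a - b)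
    (hS : IsKrullMonoid S) (v : G) (d : ℕ) (hd : 0 < d) (h : d • v ∈ S) : v ∈ S := by
  obtain ⟨a, ha, b, hb, rfl⟩ := hq v
  refine hS.1 _ ⟨d • b, S.nsmul_mem hb d, fun n => ?_⟩
  have hr : n % d ≤ d := (Nat.mod_lt n hd).le
  obtain ⟨k, hk⟩ := Nat.exists_eq_add_of_le hr
  have key : d • b + n • (a - b) = (n / d) • (d • (a - b)) + ((n % d) • a + k • b) := by
    have h1 : n • (a - b) = (n / d) • (d • (a - b)) + (n % d) • (a - b) := by
      rw [← mul_nsmul, ← add_nsmul, Nat.div_add_mod]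
    have h2 : d • b = (n % d) • b + k • b := by rw [← add_nsmul, ← hk]
    rw [h1, h2, nsmul_sub (a := a) (b := b) (n := n % d)]
    abel
  rw [key]
  exact S.add_mem (S.nsmul_mem h _) (S.add_mem (S.nsmul_mem ha _) (S.nsmul_mem hb _))

/-- **Claim A.** Let `S` be a reduced, finitely generated, torsion-free, non-trivial Krull
monoid whose quotient group `G` is a free abelian group of finite rank. Then `G` has a
`ℤ`-basis containing an element of `S`. -/
theorem basis_meeting_monoid {G : Type*} [AddCommGroup G] [Module.Free ℤ G]
    [Module.Finite ℤ G] (S : AddSubmonoid G)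
    (hq : ∀ x : G, ∃ a ∈ S, ∃ b ∈ S, x = a - b)
    (hred : ∀ x : G, x ∈ S → -x ∈ S → x = 0)
    (hfg : S.FG)
    (htf : IsAddTorsionFree G)
    (hnt : S ≠ ⊥)
    (hS : IsKrullMonoid S) :
    ∃ (n : ℕ) (b : Module.Basis (Fin n) ℤ G) (i : Fin n), b i ∈ S := by
  obtain ⟨s, hs, hs0⟩ := (show ∃ s : G, s ∈ S ∧ s ≠ 0 by
    by_contra hc
    push Not at hc
    exact hnt ((AddSubmonoid.eq_bot_iff_forall S).2 hc))
  obtain ⟨m, snf⟩ := Submodule.smithNormalForm (Module.finBasis ℤ G) (Submodule.span ℤ {s})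
  have hm : m ≠ 0 := by
    rintro rfl
    have : Subsingleton (Submodule.span ℤ {s}) :=
      snf.bN.repr.toEquiv.subsingleton
    exact hs0 (congrArg Subtype.val (Subsingleton.elim
      (⟨s, Submodule.mem_span_singleton_self s⟩ : Submodule.span ℤ {s}) 0))
  let i : Fin m := ⟨0, Nat.pos_of_ne_zero hm⟩
  obtain ⟨t, ht⟩ := Submodule.mem_span_singleton.1 (snf.bN i).2
  have hsn := snf.snf i
  have hne : snf.bN i ≠ 0 := snf.bN.ne_zero i
  have ha : snf.a i ≠ 0 := by
    intro h
    rw [h, zero_smul] at hsn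
    exact hne (Subtype.ext hsn)
  have heq : t • s = snf.a i • snf.bM (snf.f i) := ht.trans hsn
  have hpos : 0 < (snf.a i).natAbs := Int.natAbs_pos.2 ha
  have hmem : t.natAbs • s ∈ S := S.nsmul_mem hs _
  have hor : (snf.a i).natAbs • snf.bM (snf.f i) = t.natAbs • s ∨
      (snf.a i).natAbs • (-snf.bM (snf.f i)) = t.natAbs • s := by
    simp only [← natCast_zsmul]
    rcases Int.natAbs_eq t with h1 | h1 <;> rcases Int.natAbs_eq (snf.a i) with h2 | h2 <;>
      rw [h1, h2] at heq <;> simp only [neg_smul, smul_neg, neg_inj] at heq ⊢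
    · exact Or.inl heq.symm
    · exact Or.inr heq.symm
    · right; rw [← heq, neg_neg]
    · exact Or.inl heq.symm
  rcases hor with h | h
  · exact ⟨_, snf.bM, snf.f i, root_mem_aux S hq hS _ _ hpos (h ▸ hmem)⟩
  · refine ⟨_, snf.bM.map (LinearEquiv.neg ℤ), snf.f i, ?_⟩
    have := root_mem_aux S hq hS _ _ hpos (h ▸ hmem)
    simpa using this

end
end

section
/- Let K be a field, S a reduced torsion-free Krull monoid with quotient group G, P a height-one prime ideal of S with associated P-adic valuation v_P : G → ℤ, and a ∈ S with v_P(a) = 1. Let g_1, …, g_n ∈ G with v_P(g_1) = … = v_P(g_n) = 0. Then the element g = X^{g_1} + … + X^{g_n} + X^{g_n + a} is irreducible in the group algebra K[G]. -/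
open scoped nonZeroDivisors

noncomputable section

/-- The localization `S_P = {s - t : s ∈ S, t ∈ S \ P}` of `S` at a prime ideal `P`,
as a subset of the ambient group. -/
def monLoc {G : Type*} [AddCommGroup G] (S : AddSubmonoid G) (P : Set G) : Set G :=
  {x : G | ∃ s ∈ S, ∃ t ∈ S, t ∉ P ∧ x = s - t}

/-- The maximal ideal `P + S_P` of the localization `S_P`, as a subset of the ambient
group. -/
def monLocMax {G : Type*} [AddCommGroup G] (S : AddSubmonoid G) (P : Set G) : Set G :=
  {x : G | ∃ u ∈ P, ∃ w ∈ monLoc S P, x = u + w}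

/-- `v_P(x) = 0` for the normalized `P`-adic valuation: `x` is a unit of the localization
`S_P`. -/
def mvalZero {G : Type*} [AddCommGroup G] (S : AddSubmonoid G) (P : Set G) (x : G) : Prop :=
  x ∈ monLoc S P ∧ -x ∈ monLoc S P

/-- `v_P(x) = 1` for the normalized `P`-adic valuation: `x ∈ P·S_P` but `x` is not a sum of
two elements of `P·S_P`. -/
def mvalOne {G : Type*} [AddCommGroup G] (S : AddSubmonoid G) (P : Set G) (x : G) : Prop :=
  x ∈ monLocMax S P ∧ ¬ ∃ y ∈ monLocMax S P, ∃ z ∈ monLocMax S P, x = y + z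

/-- `v_P(x) ≥ 2` for the normalized `P`-adic valuation: `x` is a sum of two elements of
`P·S_P`. -/
def mvalGeTwo {G : Type*} [AddCommGroup G] (S : AddSubmonoid G) (P : Set G) (x : G) : Prop :=
  ∃ y ∈ monLocMax S P, ∃ z ∈ monLocMax S P, x = y + z

/-- A (proper) prime ideal of the monoid `S`. -/
def IsMonoidPrimeIdeal {G : Type*} [AddCommGroup G] (S : AddSubmonoid G) (P : Set G) :
    Prop :=
  P ⊆ (S : Set G) ∧ (∀ p ∈ P, ∀ s ∈ S, p + s ∈ P) ∧ P ≠ (S : Set G) ∧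
    ∀ a ∈ S, ∀ b ∈ S, a + b ∈ P → a ∈ P ∨ b ∈ P

/-- A height-one prime ideal of the monoid `S`: a nonempty prime ideal that is minimal
among nonempty prime ideals. -/
def IsMonoidHeightOnePrime {G : Type*} [AddCommGroup G] (S : AddSubmonoid G) (P : Set G) :
    Prop :=
  IsMonoidPrimeIdeal S P ∧ P.Nonempty ∧
    ∀ Q : Set G, IsMonoidPrimeIdeal S Q → Q.Nonempty → Q ⊆ P → Q = P


section aux
variable {G : Type*} [AddCommGroup G] {S : AddSubmonoid G} {P : Set G}

theorem aux_zero_notMem (hP : IsMonoidPrimeIdeal S P) : (0 : G) ∉ P := by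
  intro h0
  apply hP.2.2.1
  apply Set.Subset.antisymm hP.1
  intro s hs
  simpa using hP.2.1 0 h0 s hs

theorem aux_add_notMem (hP : IsMonoidPrimeIdeal S P) {s t : G} (hs : s ∈ S) (ht : t ∈ S)
    (hs' : s ∉ P) (ht' : t ∉ P) : s + t ∉ P := by
  intro h
  rcases hP.2.2.2 s hs t ht h with h | h <;> contradiction

theorem aux_loc_add (hP : IsMonoidPrimeIdeal S P) {x y : G} (hx : x ∈ monLoc S P)
    (hy : y ∈ monLoc S P) : x + y ∈ monLoc S P := by
  obtain ⟨s, hs, t, ht, htP, rfl⟩ := hx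
  obtain ⟨s', hs', t', ht', htP', rfl⟩ := hy
  exact ⟨s + s', S.add_mem hs hs', t + t', S.add_mem ht ht',
    aux_add_notMem hP ht ht' htP htP', by abel⟩

theorem aux_loc_of (hP : IsMonoidPrimeIdeal S P) {x : G} (hx : x ∈ S) : x ∈ monLoc S P :=
  ⟨x, hx, 0, S.zero_mem, aux_zero_notMem hP, by simp⟩

theorem aux_max_add (hP : IsMonoidPrimeIdeal S P) {x y : G} (hx : x ∈ monLocMax S P)
    (hy : y ∈ monLoc S P) : x + y ∈ monLocMax S P := by
  obtain ⟨u, hu, w, hw, rfl⟩ := hx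
  exact ⟨u, hu, w + y, aux_loc_add hP hw hy, by abel⟩

theorem aux_max_loc (hP : IsMonoidPrimeIdeal S P) {x : G} (hx : x ∈ monLocMax S P) :
    x ∈ monLoc S P := by
  obtain ⟨u, hu, w, hw, rfl⟩ := hx
  exact aux_loc_add hP (aux_loc_of hP (hP.1 hu)) hw

theorem aux_max_of (hP : IsMonoidPrimeIdeal S P) {x : G} (hx : x ∈ P) : x ∈ monLocMax S P :=
  ⟨x, hx, 0, aux_loc_of hP S.zero_mem, by simp⟩

theorem aux_max_sub (hP : IsMonoidPrimeIdeal S P) {x : G} (hx : x ∈ S)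
    (h : x ∈ monLocMax S P) : x ∈ P := by
  obtain ⟨u, hu, w, ⟨s, hs, t, ht, htP, rfl⟩, rfl⟩ := h
  have h1 : u + (s - t) + t ∈ P := by
    have := hP.2.1 u hu s hs
    convert this using 1; abel
  exact (hP.2.2.2 _ hx t ht h1).resolve_right htP

theorem aux_zero_max (hP : IsMonoidPrimeIdeal S P) : (0 : G) ∉ monLocMax S P :=
  fun h => aux_zero_notMem hP (aux_max_sub hP S.zero_mem h)

theorem aux_max_neg (hP : IsMonoidPrimeIdeal S P) {x : G} (hx : x ∈ monLocMax S P) :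
    -x ∉ monLoc S P := fun h => aux_zero_max hP (by simpa using aux_max_add hP hx h)

theorem aux_unit (hP : IsMonoidPrimeIdeal S P) {x : G} (hx : x ∈ monLoc S P)
    (h : x ∉ monLocMax S P) : mvalZero S P x := by
  refine ⟨hx, ?_⟩
  obtain ⟨s, hs, t, ht, htP, rfl⟩ := hx
  refine ⟨t, ht, s, hs, fun hsP => h ?_, by abel⟩
  exact ⟨s, hsP, -t, ⟨0, S.zero_mem, t, ht, htP, by simp⟩, by abel⟩

theorem aux_unit_add (hP : IsMonoidPrimeIdeal S P) {x y : G} (hx : mvalZero S P x)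
    (hy : mvalZero S P y) : mvalZero S P (x + y) :=
  ⟨aux_loc_add hP hx.1 hy.1, by rw [neg_add]; exact aux_loc_add hP hx.2 hy.2⟩

theorem aux_unit_neg {x : G} (hx : mvalZero S P x) : mvalZero S P (-x) :=
  ⟨hx.2, by simpa using hx.1⟩

/-- the colon ideal -/
def auxColon (S : AddSubmonoid G) (c : G) : Set G := {x | x ∈ S ∧ x + c ∈ S}

theorem auxColon_div (c : G) : monDual S (monDual S (auxColon S c)) = auxColon S c := by
  apply Set.Subset.antisymm
  · intro x hx
    refine ⟨?_, ?_⟩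
    · simpa using hx 0 (fun y hy => by simpa using hy.1)
    · exact hx c (fun y hy => by rw [add_comm]; exact hy.2)
  · intro x hx y hy
    rw [add_comm]; exact hy x hx

theorem aux_exists_colon (hS : IsKrullMonoid S) (hP : IsMonoidHeightOnePrime S P) :
    ∃ c : G, P = auxColon S c := by
  obtain ⟨hPp, ⟨p, hp⟩, hmin⟩ := hP
  -- maximal element
  have key : ∃ s ∈ S, auxColon S (s - p) ⊆ P ∧ ∀ t ∈ S, auxColon S (s + t - p) ⊆ P →
      auxColon S (s + t - p) ⊆ auxColon S (s - p) := by
    by_contra hcon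
    push Not at hcon
    choose! f hf1 hf2 hf3 using hcon
    let F : ℕ → G := fun n => Nat.rec 0 (fun _ s => s + f s) n
    have hF : ∀ n, F n ∈ S ∧ auxColon S (F n - p) ⊆ P := by
      intro n
      induction n with
      | zero =>
        refine ⟨S.zero_mem, fun x hx => ?_⟩
        have h2 : x + (0 - p) ∈ S := hx.2
        have := hPp.2.1 p hp _ h2
        convert this using 1; abel
      | succ n ih =>
        exact ⟨S.add_mem ih.1 (hf1 _ ih.1 ih.2), hf2 _ ih.1 ih.2⟩
    obtain ⟨n, hn⟩ := hS.2 (fun n => auxColon S (F n - p)) (fun n x hx => hx.1)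
      (fun n => auxColon_div _) (by
        intro n x hx
        refine ⟨hx.1, ?_⟩
        have := S.add_mem hx.2 (hf1 _ (hF n).1 (hF n).2)
        change x + (F n + f (F n) - p) ∈ S
        convert this using 1; abel)
    have h1 := hn (n+1) (by omega)
    exact hf3 _ (hF n).1 (hF n).2 h1.le
  obtain ⟨s, hs, hsP, hmax⟩ := key
  refine ⟨s - p, (hmin _ ⟨fun x hx => hx.1, ?_, ?_, ?_⟩ ?_ hsP).symm⟩
  · intro x hx y hy
    refine ⟨S.add_mem hx.1 hy, ?_⟩
    have := S.add_mem hx.2 hy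
    convert this using 1; abel
  · intro h
    exact aux_zero_notMem hPp (hsP (h ▸ S.zero_mem : (0:G) ∈ auxColon S (s - p)))
  · have cancel : ∀ t ∈ S, t ∉ P → ∀ z ∈ S, z + t ∈ auxColon S (s - p) →
        z ∈ auxColon S (s - p) := by
      intro t ht htP z hz hzt
      apply hmax t ht
      · intro y hy
        have : y + t ∈ P := hsP ⟨S.add_mem hy.1 ht, by
          have := hy.2
          convert this using 1; abel⟩
        exact (hPp.2.2.2 y hy.1 t ht this).resolve_right htP
      · refine ⟨hz, ?_⟩
        have := hzt.2
        convert this using 1; abel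
    intro x hx y hy hxy
    by_cases hsub : auxColon S (s + x - p) ⊆ P
    · right
      apply hmax x hx hsub
      refine ⟨hy, ?_⟩
      have := hxy.2
      convert this using 1; abel
    · left
      obtain ⟨t, ht, htP⟩ := Set.not_subset.1 hsub
      apply cancel t ht.1 htP x hx
      refine ⟨S.add_mem hx ht.1, ?_⟩
      have := ht.2
      convert this using 1; abel
  · exact ⟨p, hPp.1 hp, by simpa using hs⟩

theorem aux_principal (hS : IsKrullMonoid S) (hP : IsMonoidHeightOnePrime S P) :
    ∃ u : G, ∀ x ∈ monLocMax S P, x - u ∈ monLoc S P ∧ u ∈ monLocMax S P := by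
  obtain ⟨c, hc⟩ := aux_exists_colon hS hP
  have hPp := hP.1
  have hcS : c ∉ S := fun h => aux_zero_notMem hPp (by
    rw [hc]; exact ⟨S.zero_mem, by simpa using h⟩)
  have h1 : ∃ u ∈ P, u + c ∉ P := by
    by_contra hcon
    push Not at hcon
    obtain ⟨u, hu⟩ := hP.2.1
    apply hcS
    apply hS.1
    refine ⟨u, hPp.1 hu, fun n => hPp.1 ?_⟩
    induction n with
    | zero => simpa using hu
    | succ n ih => rw [succ_nsmul, ← add_assoc]; exact hcon _ ih
  obtain ⟨u, hu, huc⟩ := h1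
  have hucS : u + c ∈ S := by rw [hc] at hu; exact hu.2
  refine ⟨u, fun x hx => ⟨?_, aux_max_of hPp hu⟩⟩
  obtain ⟨y, hy, w, hw, rfl⟩ := hx
  have hyc : y + c ∈ S := by rw [hc] at hy; exact hy.2
  have h2 : (y + c) - (u + c) ∈ monLoc S P := ⟨_, hyc, _, hucS, huc, rfl⟩
  have := aux_loc_add hPp h2 hw
  convert this using 1; abel

theorem aux_principal' (hS : IsKrullMonoid S) (hP : IsMonoidHeightOnePrime S P)
    {a : G} (hva : mvalOne S P a) {x : G} (hx : x ∈ monLocMax S P) : x - a ∈ monLoc S P := by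
  obtain ⟨u, hu⟩ := aux_principal hS hP
  have hPp := hP.1
  have h1 := hu a hva.1
  have h2 : a - u ∉ monLocMax S P := fun h => hva.2 ⟨u, h1.2, a - u, h, by abel⟩
  have h3 := aux_unit hPp h1.1 h2
  have := aux_loc_add hPp (hu x hx).1 h3.2
  convert this using 1; abel

theorem aux_decomp_S (hS : IsKrullMonoid S) (hP : IsMonoidHeightOnePrime S P)
    {a : G} (haS : a ∈ S) (hva : mvalOne S P a) {x : G} (hx : x ∈ S) :
    ∃ k : ℤ, mvalZero S P (x - k • a) := by
  have hPp := hP.1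
  let Q : Set G := {x | x ∈ S ∧ ∀ k : ℕ, x - k • a ∈ monLoc S P}
  have hnQ : ∀ x ∈ S, x ∉ Q → ∃ k : ℕ, mvalZero S P (x - k • a) := by
    intro x hx hxQ
    have hex : ∃ k : ℕ, x - k • a ∉ monLoc S P := by
      by_contra hcon
      push Not at hcon
      exact hxQ ⟨hx, hcon⟩
    classical
    have hsp := Nat.find_spec hex
    have hm := fun m => Nat.find_min (m := m) hex
    generalize Nat.find hex = N at hsp hm
    cases N with
    | zero => exact absurd (aux_loc_of hPp hx) (by simpa using hsp)
    | succ N =>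
      have h1 := hm N (by omega)
      rw [not_not] at h1
      refine ⟨N, aux_unit hPp h1 fun h => hsp ?_⟩
      have := aux_principal' hS hP hva h
      rw [succ_nsmul]
      convert this using 1; abel
  have haP : a ∈ P := aux_max_sub hPp haS hva.1
  have haQ : a ∉ Q := by
    intro h
    have := h.2 2
    rw [two_nsmul] at this
    exact aux_max_neg hPp hva.1 (by simpa using this)
  have hxQ : x ∉ Q := by
    intro hxQ
    have hQP : Q ⊆ P := by
      intro y hy
      apply aux_max_sub hPp hy.1
      have := aux_max_add hPp hva.1 (hy.2 1)
      simpa using this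
    have : Q = P := by
      refine hP.2.2 Q ⟨fun y hy => hy.1, ?_, ?_, ?_⟩ ⟨x, hxQ⟩ hQP
      · intro y hy z hz
        refine ⟨S.add_mem hy.1 hz, fun k => ?_⟩
        have := aux_loc_add hPp (hy.2 k) (aux_loc_of hPp hz)
        convert this using 1; abel
      · intro h
        exact haQ (h ▸ haS : a ∈ Q)
      · intro y hy z hz hyz
        by_contra hcon
        push Not at hcon
        obtain ⟨k, hk⟩ := hnQ y hy hcon.1
        obtain ⟨l, hl⟩ := hnQ z hz hcon.2
        have h1 := aux_unit_add hPp hk hl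
        have h2 := hyz.2 (k + l + 1)
        have h3 := aux_loc_add hPp h2 h1.2
        apply aux_max_neg hPp hva.1
        convert h3 using 1
        simp only [add_nsmul, one_nsmul]; abel
    exact haQ (this ▸ haP)
  obtain ⟨k, hk⟩ := hnQ x hx hxQ
  exact ⟨k, by simpa using hk⟩

theorem aux_nsmul_max (hP : IsMonoidPrimeIdeal S P) {a : G} (ha : a ∈ monLocMax S P) (k : ℕ) :
    (k + 1) • a ∈ monLocMax S P := by
  induction k with
  | zero => simpa using ha
  | succ k ih => rw [succ_nsmul]; exact aux_max_add hP ih (aux_max_loc hP ha)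

theorem aux_zsmul (hP : IsMonoidPrimeIdeal S P) {a : G} (ha : a ∈ monLocMax S P) {k : ℤ}
    (hk : mvalZero S P (k • a)) : k = 0 := by
  rcases lt_trichotomy k 0 with h | h | h
  · obtain ⟨m, rfl⟩ : ∃ m : ℕ, k = -((m : ℤ) + 1) := ⟨(-k - 1).toNat, by omega⟩
    have := aux_nsmul_max hP ha m
    have h2 := aux_max_neg hP this
    refine absurd ?_ h2
    have h3 := hk.1
    rw [neg_smul] at h3
    exact_mod_cast h3
  · exact h
  · obtain ⟨m, rfl⟩ : ∃ m : ℕ, k = ((m : ℤ) + 1) := ⟨(k - 1).toNat, by omega⟩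
    have := aux_nsmul_max hP ha m
    have h2 := aux_max_neg hP this
    refine absurd ?_ h2
    have h3 := hk.2
    exact_mod_cast h3

theorem aux_valuation (hq : ∀ x : G, ∃ a ∈ S, ∃ b ∈ S, x = a - b)
    (hS : IsKrullMonoid S) (hP : IsMonoidHeightOnePrime S P)
    {a : G} (haS : a ∈ S) (hva : mvalOne S P a) :
    ∃ v : G →+ ℤ, v a = 1 ∧ ∀ x, mvalZero S P x → v x = 0 := by
  have hPp := hP.1
  have hex : ∀ x : G, ∃ k : ℤ, mvalZero S P (x - k • a) := by
    intro x
    obtain ⟨s, hs, t, ht, rfl⟩ := hq x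
    obtain ⟨k, hk⟩ := aux_decomp_S hS hP haS hva hs
    obtain ⟨l, hl⟩ := aux_decomp_S hS hP haS hva ht
    refine ⟨k - l, ?_⟩
    have := aux_unit_add hPp hk (aux_unit_neg hl)
    convert this using 1
    rw [sub_smul]; abel
  choose f hf using hex
  have huniq : ∀ x k, mvalZero S P (x - k • a) → f x = k := by
    intro x k hk
    have h1 := aux_unit_add hPp hk (aux_unit_neg (hf x))
    have h2 : mvalZero S P ((f x - k) • a) := by
      convert h1 using 1
      rw [sub_smul]; abel
    have := aux_zsmul hPp hva.1 h2
    omega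
  refine ⟨AddMonoidHom.mk' f ?_, ?_, ?_⟩
  · intro x y
    apply huniq
    have := aux_unit_add hPp (hf x) (hf y)
    convert this using 1
    rw [add_smul]; abel
  · apply huniq
    have h0 := aux_loc_of hPp S.zero_mem
    simpa [mvalZero] using h0
  · intro x hx
    apply huniq
    simpa using hx

end aux

section alg

theorem aux_uniqueSums_s9 {G : Type*} [AddCommGroup G] [IsAddTorsionFree G] : UniqueSums G where
  uniqueAdd_of_nonempty := by
    classical
    intro A B hA hB
    let H : AddSubgroup G := AddSubgroup.closure ((A ∪ B : Finset G) : Set G)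
    have hfg : AddGroup.FG H := AddGroup.closure_finset_fg _
    have hfg' : AddMonoid.FG H := inferInstance
    have htf : IsAddTorsionFree H := inferInstance
    have hU : TwoUniqueSums H := inferInstance
    have hAH : ∀ x ∈ A, x ∈ H := fun x hx => AddSubgroup.subset_closure (by simp [hx])
    have hBH : ∀ x ∈ B, x ∈ H := fun x hx => AddSubgroup.subset_closure (by simp [hx])
    obtain ⟨a, ha⟩ := hA
    obtain ⟨b, hb⟩ := hB
    obtain ⟨a0, ha0, b0, hb0, hu⟩ := UniqueSums.uniqueAdd_of_nonempty
      (A := A.subtype (· ∈ H)) (B := B.subtype (· ∈ H))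
      ⟨⟨a, hAH a ha⟩, by simpa using ha⟩ ⟨⟨b, hBH b hb⟩, by simpa using hb⟩
    refine ⟨a0, by simpa using ha0, b0, by simpa using hb0, ?_⟩
    intro x y hx hy hxy
    have := @hu ⟨x, hAH x hx⟩ ⟨y, hBH y hy⟩ (by simpa using hx) (by simpa using hy)
      (Subtype.ext hxy)
    exact ⟨congrArg Subtype.val this.1, congrArg Subtype.val this.2⟩

open Polynomial in
theorem aux_lin_ne {R : Type*} [CommRing R] [IsDomain R] {A B : R} (hB : B ≠ 0) :
    C B * X + C A ≠ 0 := by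
  intro h
  have := natDegree_linear (b := A) hB
  simp [h] at this

open Polynomial in
theorem aux_lin_trail {R : Type*} [CommRing R] [IsDomain R] {A B : R} (hA : A ≠ 0) :
    (C B * X + C A).natTrailingDegree = 0 := by
  apply natTrailingDegree_eq_zero.2
  right
  simpa

open Polynomial in
theorem aux_monomial {R : Type*} [CommRing R] [IsDomain R] {p : R[X]}
    (h : p.natDegree ≤ p.natTrailingDegree) : p = C p.leadingCoeff * X ^ p.natDegree := by
  ext n
  rw [coeff_C_mul_X_pow]
  split_ifs with hn
  · rw [hn]; rfl
  · rcases lt_or_gt_of_ne hn with h1 | h1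
    · exact coeff_eq_zero_of_lt_natTrailingDegree (by omega)
    · exact coeff_eq_zero_of_natDegree_lt h1

open Polynomial in
theorem aux_poly {R : Type*} [CommRing R] [IsDomain R] {A B : R} (hA : A ≠ 0) (hB : IsUnit B)
    {N : ℕ} {p q : R[X]} (h : p * q = (C B * X + C A) * X ^ N) :
    (∃ c j, IsUnit c ∧ p = C c * X ^ j) ∨ (∃ c j, IsUnit c ∧ q = C c * X ^ j) := by
  have hB0 := hB.ne_zero
  have hX : (X ^ N : R[X]) ≠ 0 := by simp
  have hl := aux_lin_ne (A := A) hB0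
  have hpq : p * q ≠ 0 := by rw [h]; exact mul_ne_zero hl hX
  have hp := left_ne_zero_of_mul hpq
  have hq := right_ne_zero_of_mul hpq
  have h1 := congrArg natDegree h
  have h2 := congrArg natTrailingDegree h
  have h3 := congrArg leadingCoeff h
  rw [natDegree_mul hp hq, natDegree_mul hl hX, natDegree_linear hB0, natDegree_X_pow] at h1
  rw [natTrailingDegree_mul hp hq, natTrailingDegree_mul hl hX, aux_lin_trail hA,
    natTrailingDegree_X_pow] at h2
  rw [leadingCoeff_mul, leadingCoeff_mul, leadingCoeff_linear hB0, leadingCoeff_X_pow,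
    mul_one] at h3
  rw [← h3] at hB
  have h4 := natTrailingDegree_le_natDegree p
  have h5 := natTrailingDegree_le_natDegree q
  by_cases h6 : p.natDegree ≤ p.natTrailingDegree
  · exact Or.inl ⟨_, _, isUnit_of_mul_isUnit_left hB, aux_monomial h6⟩
  · exact Or.inr ⟨_, _, isUnit_of_mul_isUnit_right hB, aux_monomial (by omega)⟩

open LaurentPolynomial in
theorem aux_irred {R : Type*} [CommRing R] [IsDomain R] {A B : R} (hA : A ≠ 0) (hB : IsUnit B)
    (φ : R →+* LaurentPolynomial R)
    (hφ : ∀ x, LaurentPolynomial.eval₂ (RingHom.id R) 1 (φ x) = x)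
    (hAB : φ (A + B) = C A + C B * T 1) : Irreducible (A + B) := by
  have hlin : φ (A + B) = Polynomial.toLaurent (Polynomial.C B * Polynomial.X + Polynomial.C A) := by
    rw [hAB]; simp [add_comm]
  have hB0 := hB.ne_zero
  have hl := aux_lin_ne (A := A) hB0
  have hev : ∀ (x : R) (n : ℕ) (p : Polynomial R), Polynomial.toLaurent p = φ x * T n →
      ∀ c j, p = Polynomial.C c * Polynomial.X ^ j → x = c := by
    intro x n p hp c j hc
    have := congrArg (LaurentPolynomial.eval₂ (RingHom.id R) 1) hp
    rw [map_mul, hφ, eval₂_toLaurent, hc] at this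
    simpa using this.symm
  refine ⟨?_, ?_⟩
  · intro hu
    obtain ⟨y, hy⟩ := hu.exists_right_inv
    obtain ⟨m, p, hp⟩ := exists_T_pow (φ y)
    have h : (Polynomial.C B * Polynomial.X + Polynomial.C A) * p = Polynomial.X ^ m := by
      apply Polynomial.toLaurent_injective
      rw [map_mul, ← hlin, hp, ← mul_assoc, ← map_mul, hy]
      simp
    have hp0 : p ≠ 0 := by
      rintro rfl
      simp at h
      exact (pow_ne_zero m Polynomial.X_ne_zero) h.symm
    have h1 := congrArg Polynomial.natDegree h
    have h2 := congrArg Polynomial.natTrailingDegree h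
    rw [Polynomial.natDegree_mul hl hp0, Polynomial.natDegree_linear hB0,
      Polynomial.natDegree_X_pow] at h1
    rw [Polynomial.natTrailingDegree_mul hl hp0, aux_lin_trail hA,
      Polynomial.natTrailingDegree_X_pow] at h2
    have := Polynomial.natTrailingDegree_le_natDegree p
    omega
  · intro x y hxy
    obtain ⟨m, p, hp⟩ := exists_T_pow (φ x)
    obtain ⟨k, q, hq⟩ := exists_T_pow (φ y)
    have h : p * q = (Polynomial.C B * Polynomial.X + Polynomial.C A) * Polynomial.X ^ (m + k) := by
      apply Polynomial.toLaurent_injective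
      rw [map_mul, map_mul, ← hlin, hp, hq, hxy, map_mul, Polynomial.toLaurent_X_pow]
      push_cast
      rw [T_add]; ring
    rcases aux_poly hA hB h with ⟨c, j, hc, h⟩ | ⟨c, j, hc, h⟩
    · left; rw [hev x m p hp c j h]; exact hc
    · right; rw [hev y k q hq c j h]; exact hc

/-- the grading map -/
def auxPhi (K : Type*) [Field K] {G : Type*} [AddCommGroup G] (v : G →+ ℤ) :
    AddMonoidAlgebra K G →ₐ[K] LaurentPolynomial (AddMonoidAlgebra K G) :=
  AddMonoidAlgebra.lift K _ G
    { toFun := fun m => LaurentPolynomial.C (AddMonoidAlgebra.single m.toAdd 1) *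
        LaurentPolynomial.T (v m.toAdd)
      map_one' := by
        simp [← AddMonoidAlgebra.one_def]
      map_mul' := by
        intro x y
        rw [toAdd_mul, map_add, LaurentPolynomial.T_add,
          ← one_mul (1 : K), ← AddMonoidAlgebra.single_mul_single, map_mul, one_mul]
        ring }

theorem auxPhi_single {K : Type*} [Field K] {G : Type*} [AddCommGroup G] (v : G →+ ℤ) (m : G) :
    auxPhi K v (AddMonoidAlgebra.single m 1) =
      LaurentPolynomial.C (AddMonoidAlgebra.single m 1) * LaurentPolynomial.T (v m) := by
  simp [auxPhi, AddMonoidAlgebra.lift_single]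

theorem auxPhi_eval {K : Type*} [Field K] {G : Type*} [AddCommGroup G] (v : G →+ ℤ)
    (x : AddMonoidAlgebra K G) :
    LaurentPolynomial.eval₂ (RingHom.id _) 1 (auxPhi K v x) = x := by
  induction x using AddMonoidAlgebra.induction_on with
  | of m =>
    have := auxPhi_single (K := K) v m
    simp only [AddMonoidAlgebra.of_apply, toAdd_ofAdd]
    rw [this]
    simp
  | add f g hf hg => rw [map_add, map_add, hf, hg]
  | smul r f hf =>
    rw [map_smul, Algebra.smul_def r (auxPhi K v f), map_mul, hf,
      LaurentPolynomial.algebraMap_apply, LaurentPolynomial.eval₂_C, RingHom.id_apply,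
      Algebra.smul_def]

theorem aux_final {K : Type*} [Field K] {G : Type*} [AddCommGroup G]
    (htf : IsAddTorsionFree G) (v : G →+ ℤ) (a : G) (hv1 : v a = 1)
    (n : ℕ) (g : Fin (n + 1) → G) (hginj : Function.Injective g)
    (hvg : ∀ i, v (g i) = 0) :
    Irreducible ((∑ i, AddMonoidAlgebra.single (g i) (1 : K)) +
      AddMonoidAlgebra.single (g (Fin.last n) + a) (1 : K)) := by
  classical
  have hU : UniqueSums G := aux_uniqueSums_s9
  have hD : IsDomain (AddMonoidAlgebra K G) := inferInstance
  have hA : (∑ i, AddMonoidAlgebra.single (g i) (1 : K)) ≠ 0 := by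
    intro h
    have := congrArg (fun f => f.coeff (g 0)) h
    simp [AddMonoidAlgebra.coeff_sum, Finsupp.single_apply, hginj.eq_iff] at this
  have hB : IsUnit (AddMonoidAlgebra.single (g (Fin.last n) + a) (1 : K)) := by
    refine IsUnit.of_mul_eq_one (AddMonoidAlgebra.single (-(g (Fin.last n) + a)) 1) ?_
    rw [AddMonoidAlgebra.single_mul_single, add_neg_cancel, one_mul, AddMonoidAlgebra.one_def]
  refine aux_irred hA hB (auxPhi K v).toRingHom (fun x => auxPhi_eval v x) ?_
  change auxPhi K v _ = _
  rw [map_add, map_sum, map_sum, auxPhi_single, map_add, hvg, hv1, zero_add]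
  congr 1
  refine Finset.sum_congr rfl fun i _ => ?_
  rw [auxPhi_single, hvg, LaurentPolynomial.T_zero, mul_one]

end alg

/-- **Claim B.** Let `K` be a field, `S` a reduced torsion-free Krull monoid with quotient
group `G`, `P` a height-one prime ideal of `S`, `a ∈ S` with `v_P(a) = 1`, and
`g₀, …, gₙ ∈ G` pairwise distinct with `v_P(gᵢ) = 0` for all `i`. Then
`X^{g₀} + … + X^{gₙ} + X^{gₙ + a}` is irreducible in the group algebra `K[G]`. -/
theorem claim_B_irreducible {K : Type*} [Field K] {G : Type*} [AddCommGroup G]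
    (S : AddSubmonoid G)
    (hq : ∀ x : G, ∃ a ∈ S, ∃ b ∈ S, x = a - b)
    (htf : IsAddTorsionFree G)
    (hred : ∀ x : G, x ∈ S → -x ∈ S → x = 0)
    (hS : IsKrullMonoid S)
    (P : Set G) (hP : IsMonoidHeightOnePrime S P)
    (a : G) (haS : a ∈ S) (hva : mvalOne S P a)
    (n : ℕ) (g : Fin (n + 1) → G) (hginj : Function.Injective g)
    (hvg : ∀ i, mvalZero S P (g i)) :
    Irreducible ((∑ i, AddMonoidAlgebra.single (g i) (1 : K)) +
      AddMonoidAlgebra.single (g (Fin.last n) + a) (1 : K)) := by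
  obtain ⟨v, hv1, hv0⟩ := aux_valuation hq hS hP haS hva
  exact aux_final htf v a hv1 n g hginj fun i => hv0 _ (hvg i)

end
end

section
/- Let G be an abelian group and g ∈ G an element of infinite order, and let G_0 = {-2g, -g, g, 2g}. Let B(G_0) be the monoid of zero-sum sequences over G_0. Then B(G_0) is a finitely generated, reduced, torsion-free Krull monoid that is not factorial, and its set of height-one prime ideals is exactly {p_i : i ∈ G_0}, where p_i = {T ∈ B(G_0) : i ∈ supp(T)}. -/
open scoped nonZeroDivisors

noncomputable section

/-- `p` divides `x` in the monoid `S`. -/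
def monDvd {G : Type*} [AddCommGroup G] (S : AddSubmonoid G) (p x : G) : Prop :=
  ∃ s ∈ S, x = p + s

/-- A prime element of the monoid `S`: a non-unit element of `S` such that whenever it
divides a sum of two elements of `S`, it divides one of them. -/
def IsMonoidPrimeElem {G : Type*} [AddCommGroup G] (S : AddSubmonoid G) (p : G) : Prop :=
  p ∈ S ∧ ¬ -p ∈ S ∧ ∀ a ∈ S, ∀ b ∈ S, monDvd S p (a + b) → monDvd S p a ∨ monDvd S p b

/-- The monoid `S` is factorial: every non-unit of `S` is a sum of prime elements
(equivalently, `S` is a Krull monoid with trivial divisor class group). -/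
def IsMonoidFactorial {G : Type*} [AddCommGroup G] (S : AddSubmonoid G) : Prop :=
  ∀ x ∈ S, ¬ -x ∈ S → ∃ l : Multiset G, (∀ p ∈ l, IsMonoidPrimeElem S p) ∧ l.sum = x


/-- The monoid `B(G₀)` of zero-sum sequences over a subset `G₀` of an abelian group `G`,
realized as the submonoid of the free abelian group `G →₀ ℤ` consisting of finitely
supported families of nonnegative multiplicities, supported in `G₀`, whose weighted sum
(the sum of the corresponding sequence) is zero. -/
noncomputable def zeroSumMonoid {G : Type*} [AddCommGroup G] (G₀ : Set G) : AddSubmonoid (G →₀ ℤ) where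
  carrier := {f | (∀ x, 0 ≤ f x) ∧ (∀ x ∈ f.support, x ∈ G₀) ∧ f.sum (fun x n => n • x) = 0}
  zero_mem' := ⟨fun x => le_refl 0, by simp, by simp⟩
  add_mem' := by
    rintro f h ⟨hf1, hf2, hf3⟩ ⟨hh1, hh2, hh3⟩
    refine ⟨fun x => by simpa using add_nonneg (hf1 x) (hh1 x), ?_, ?_⟩
    · intro x hx
      classical
      rcases Finset.mem_union.mp (Finsupp.support_add hx) with h' | h'
      exacts [hf2 x h', hh2 x h']
    · rw [Finsupp.sum_add_index' (fun x => zero_smul ℤ x) (fun x m n => add_smul m n x)]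
      rw [hf3, hh3, add_zero]

section helpers

variable {G : Type*} [AddCommGroup G]

lemma zs_mem {G₀ : Set G} {f : G →₀ ℤ} : f ∈ zeroSumMonoid G₀ ↔
    (∀ x, 0 ≤ f x) ∧ (∀ x, f x ≠ 0 → x ∈ G₀) ∧ f.sum (fun x n => n • x) = 0 := by
  change (_ ∧ _ ∧ _) ↔ _
  simp only [Finsupp.mem_support_iff]

lemma zs_sum_sub (f h : G →₀ ℤ) : (f - h).sum (fun x n => n • x) =
    f.sum (fun x n => n • x) - h.sum (fun x n => n • x) :=
  Finsupp.sum_sub_index (fun a b c => sub_smul b c a)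

lemma zs_sub {G₀ : Set G} {f h : G →₀ ℤ} (hf : f ∈ zeroSumMonoid G₀)
    (hh : h ∈ zeroSumMonoid G₀) (hle : ∀ x, h x ≤ f x) : f - h ∈ zeroSumMonoid G₀ := by
  rw [zs_mem] at *
  refine ⟨fun x => by simpa using hle x, fun x hx => ?_, ?_⟩
  · by_contra hc
    have h1 : f x = 0 := by by_contra h'; exact hc (hf.2.1 x h')
    have h2 : h x = 0 := by by_contra h'; exact hc (hh.2.1 x h')
    simp [h1, h2] at hx
  · rw [zs_sum_sub, hf.2.2, hh.2.2, sub_zero]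

lemma zs_reduced {G₀ : Set G} (f : G →₀ ℤ) (hf : f ∈ zeroSumMonoid G₀)
    (hf' : -f ∈ zeroSumMonoid G₀) : f = 0 := by
  rw [zs_mem] at *
  ext x
  have h1 := hf.1 x
  have h2 := hf'.1 x
  simp at h2 ⊢
  omega

lemma zs_cic {G₀ : Set G} (f : G →₀ ℤ) (c : G →₀ ℤ) (hc : c ∈ zeroSumMonoid G₀)
    (h : ∀ n : ℕ, c + n • f ∈ zeroSumMonoid G₀) : f ∈ zeroSumMonoid G₀ := by
  have h1 := h 1
  have hf : f = (c + 1 • f) - c := by simp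
  rw [hf]
  apply zs_sub h1 hc
  intro x
  have hx : 0 ≤ f x := by
    by_contra hlt
    push Not at hlt
    have hcx := (zs_mem.1 hc).1 x
    have := (zs_mem.1 (h (c x + 1).toNat)).1 x
    simp at this
    have e : ((c x + 1).toNat : ℤ) = c x + 1 := by omega
    have e2 : max (c x + 1) 0 = c x + 1 := by omega
    rw [e2] at this
    nlinarith
  simpa using hx

lemma zs_dickson {G₀ : Set G} (hfin : G₀.Finite) (x : ℕ → (G →₀ ℤ))
    (hx : ∀ n, x n ∈ zeroSumMonoid G₀) : ∃ i j, i < j ∧ ∀ y, x i y ≤ x j y := by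
  have : Finite G₀ := hfin
  have hw : WellQuasiOrderedLE (G₀ → ℕ) := inferInstance
  obtain ⟨i, j, hij, hle⟩ := hw.wqo (fun n (y : G₀) => (x n y).toNat)
  refine ⟨i, j, hij, fun y => ?_⟩
  by_cases hy : y ∈ G₀
  · have := hle ⟨y, hy⟩
    have h0 := (zs_mem.1 (hx i)).1 y
    have h1 := (zs_mem.1 (hx j)).1 y
    simp only at this
    omega
  · have h0 : x i y = 0 := by by_contra h'; exact hy ((zs_mem.1 (hx i)).2.1 y h')
    rw [h0]
    exact (zs_mem.1 (hx j)).1 y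

lemma zs_krull {G₀ : Set G} (hfin : G₀.Finite) : IsKrullMonoid (zeroSumMonoid G₀) := by
  refine ⟨fun f ⟨c, hc, h⟩ => zs_cic f c hc h, fun f hfS hfd hmono => ?_⟩
  have hm : Monotone f := monotone_nat_of_le_succ hmono
  have hid : ∀ n, ∀ p ∈ f n, ∀ s ∈ zeroSumMonoid G₀, p + s ∈ f n := by
    intro n p hp s hs
    rw [← hfd n] at hp ⊢
    intro y hy
    have := (zeroSumMonoid G₀).add_mem (hp y hy) hs
    rwa [add_right_comm] at this
  by_contra hcon
  push Not at hcon
  have hcon' : ∀ n, ∃ m, n < m ∧ ∃ p, p ∈ f m ∧ p ∉ f n := by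
    intro n
    obtain ⟨m, hnm, hne⟩ := hcon n
    have hss : f n ⊂ f m := lt_of_le_of_ne (hm hnm) (Ne.symm hne)
    obtain ⟨p, hp, hp'⟩ := Set.exists_of_ssubset hss
    refine ⟨m, lt_of_le_of_ne hnm ?_, p, hp, hp'⟩
    rintro rfl
    exact hne rfl
  choose nx hnx p hp hp' using hcon'
  let k : ℕ → ℕ := fun n => nx^[n] 0
  have hk : ∀ n, k (n + 1) = nx (k n) := fun n => Function.iterate_succ_apply' nx n 0
  have hkm : Monotone k := monotone_nat_of_le_succ fun n => by rw [hk]; exact (hnx _).le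
  obtain ⟨i, j, hij, hle⟩ := zs_dickson hfin (fun n => p (k n)) (fun n => hfS _ (hp (k n)))
  have h1 : p (k i) ∈ f (k j) := hm (hkm hij) (by rw [hk]; exact hp _)
  have h2 := hid _ _ h1 _ (zs_sub (hfS _ (hp (k j))) (hfS _ (hp (k i))) hle)
  rw [add_sub_cancel] at h2
  exact hp' _ h2

lemma zs_bound (p : G →₀ ℤ) : ∃ N : ℕ, ∀ x, p x ≤ N := by
  refine ⟨∑ x ∈ p.support, (p x).toNat, fun x => ?_⟩
  by_cases hx : x ∈ p.support
  · have := Finset.single_le_sum (f := fun x => (p x).toNat) (fun _ _ => Nat.zero_le _) hx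
    omega
  · rw [Finsupp.notMem_support_iff.1 hx]
    positivity

lemma zs_prime {G₀ : Set G} {i : G} (h : G →₀ ℤ) (hh : h ∈ zeroSumMonoid G₀) (hi : h i ≠ 0) :
    IsMonoidPrimeIdeal (zeroSumMonoid G₀) {f | f ∈ zeroSumMonoid G₀ ∧ f i ≠ 0} := by
  refine ⟨fun f hf => hf.1, fun p hp s hs => ⟨add_mem hp.1 hs, ?_⟩, ?_, ?_⟩
  · have h1 := (zs_mem.1 hp.1).1 i
    have h2 := (zs_mem.1 hs).1 i
    have h3 := hp.2
    simp
    omega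
  · intro he
    have : (0 : G →₀ ℤ) ∈ ((zeroSumMonoid G₀ : AddSubmonoid _) : Set (G →₀ ℤ)) := zero_mem _
    rw [← he] at this
    exact this.2 rfl
  · intro a ha b hb hab
    by_contra hc
    push Not at hc
    have h1 : a i = 0 := by by_contra h'; exact hc.1 ⟨ha, h'⟩
    have h2 : b i = 0 := by by_contra h'; exact hc.2 ⟨hb, h'⟩
    apply hab.2
    simp [h1, h2]

lemma zs_nsmul {S : AddSubmonoid (G →₀ ℤ)} {P : Set (G →₀ ℤ)} (hP : IsMonoidPrimeIdeal S P)
    (n : ℕ) (f : G →₀ ℤ) (hf : f ∈ S) (h : n • f ∈ P) : f ∈ P := by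
  induction n with
  | zero =>
    exfalso
    apply hP.2.2.1
    apply le_antisymm hP.1
    intro s hs
    have := hP.2.1 _ h s hs
    simpa using this
  | succ n ih =>
    rw [succ_nsmul] at h
    rcases hP.2.2.2 _ (S.nsmul_mem hf n) _ hf h with h | h
    exacts [ih h, h]

lemma zs_height {G₀ : Set G} (hfin : G₀.Finite)
    (hne : ∀ i ∈ G₀, ∃ h ∈ zeroSumMonoid G₀, h i ≠ 0)
    (hco : ∀ i ∈ G₀, ∃ h ∈ zeroSumMonoid G₀, h i = 0 ∧ ∀ j ∈ G₀, j ≠ i → h j ≠ 0) :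
    {P | IsMonoidHeightOnePrime (zeroSumMonoid G₀) P} =
      {P | ∃ i ∈ G₀, P = {f | f ∈ zeroSumMonoid G₀ ∧ f i ≠ 0}} := by
  ext P
  constructor
  · rintro ⟨hP, ⟨p, hp⟩, hmin⟩
    suffices ∃ i ∈ G₀, {f | f ∈ zeroSumMonoid G₀ ∧ f i ≠ 0} ⊆ P by
      obtain ⟨i, hi, hsub⟩ := this
      obtain ⟨h, hh, hhi⟩ := hne i hi
      exact ⟨i, hi, (hmin _ (zs_prime h hh hhi) ⟨h, hh, hhi⟩ hsub).symm⟩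
    by_contra hcon
    push Not at hcon
    have hcon' : ∀ i : G₀, ∃ f, f ∈ zeroSumMonoid G₀ ∧ f i ≠ 0 ∧ f ∉ P := by
      intro i
      obtain ⟨f, hf, hfP⟩ := Set.not_subset.1 (hcon i i.2)
      exact ⟨f, hf.1, hf.2, hfP⟩
    choose f hf hfi hfP using hcon'
    have : Fintype G₀ := hfin.fintype
    have hsum : ∀ s : Finset G₀, ∑ i ∈ s, f i ∉ P := by
      classical
      intro s
      induction s using Finset.induction_on with
      | empty =>
        intro h0
        have := zs_nsmul hP 0 p (hP.1 hp) (by simpa using h0)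
        apply hP.2.2.1
        apply le_antisymm hP.1
        intro s hs
        have := hP.2.1 _ h0 s hs
        simpa using this
      | insert a s ha ih =>
        rw [Finset.sum_insert ha]
        intro h
        rcases hP.2.2.2 _ (hf a) _ (sum_mem fun i _ => hf i) h with h | h
        exacts [hfP a h, ih h]
    have hT : ∑ i, f i ∈ zeroSumMonoid G₀ := sum_mem fun i _ => hf i
    obtain ⟨N, hN⟩ := zs_bound p
    apply hsum Finset.univ
    apply zs_nsmul hP N _ hT
    have hNT := (zeroSumMonoid G₀).nsmul_mem hT N
    have := hP.2.1 _ hp _ (zs_sub hNT (hP.1 hp) ?_)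
    · simpa using this
    intro x
    by_cases hx : x ∈ G₀
    · have h1 : f ⟨x, hx⟩ x ≤ ∑ i, f i x :=
        Finset.single_le_sum (f := fun i => f i x) (fun i _ => (zs_mem.1 (hf i)).1 x)
          (Finset.mem_univ _)
      have h2 := (zs_mem.1 (hf ⟨x, hx⟩)).1 x
      have h3 : f ⟨x, hx⟩ x ≠ 0 := hfi ⟨x, hx⟩
      have h4 : (N • ∑ i, f i) x = N * ∑ i, f i x := by simp [Finsupp.finsetSum_apply]
      rw [h4]
      have := hN x
      have h5 : 1 ≤ ∑ i, f i x := by omega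
      nlinarith [Int.natCast_nonneg N]
    · have h0 : p x = 0 := by by_contra h'; exact hx ((zs_mem.1 (hP.1 hp)).2.1 x h')
      rw [h0]
      exact (zs_mem.1 hNT).1 x
  · rintro ⟨i, hi, rfl⟩
    obtain ⟨h, hh, hhi⟩ := hne i hi
    refine ⟨zs_prime h hh hhi, ⟨h, hh, hhi⟩, fun Q hQ ⟨q, hq⟩ hsub => ?_⟩
    apply le_antisymm hsub
    rintro f ⟨hf, hfi⟩
    obtain ⟨t, ht, hti, htj⟩ := hco i hi
    obtain ⟨N, hN⟩ := zs_bound q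
    have hbig : N • f + N • t ∈ zeroSumMonoid G₀ :=
      add_mem (AddSubmonoid.nsmul_mem _ hf N) (AddSubmonoid.nsmul_mem _ ht N)
    have key : N • f + N • t ∈ Q := by
      have := hQ.2.1 _ hq _ (zs_sub hbig (hQ.1 hq) ?_)
      · simpa using this
      intro x
      by_cases hx : x ∈ G₀
      · have h1 := (zs_mem.1 hf).1 x
        have h2 := (zs_mem.1 ht).1 x
        have h3 : 1 ≤ f x + t x := by
          by_cases hxi : x = i
          · subst hxi; omega
          · have := htj x hx hxi; omega
        have h4 := hN x
        simp
        nlinarith [Int.natCast_nonneg N]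
      · have h0 : q x = 0 := by by_contra h'; exact hx ((zs_mem.1 (hQ.1 hq)).2.1 x h')
        rw [h0]
        exact (zs_mem.1 hbig).1 x
    rcases hQ.2.2.2 _ (AddSubmonoid.nsmul_mem _ hf N) _ (AddSubmonoid.nsmul_mem _ ht N) key with h | h
    · exact zs_nsmul hQ N f hf h
    · exact absurd hti (hsub (zs_nsmul hQ N t ht h)).2

/-- The sequence with the four given multiplicities. -/
def zsF (g : G) (a b c d : ℤ) : G →₀ ℤ :=
  Finsupp.single (-((2 : ℤ) • g)) a + Finsupp.single (-g) b + Finsupp.single g c +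
    Finsupp.single ((2 : ℤ) • g) d

lemma zs_ne {g : G} (hg : ¬ IsOfFinAddOrder g) (n : ℤ) (h : n • g = 0) : n = 0 := by
  by_contra hn
  exact hg (isOfFinAddOrder_iff_zsmul_eq_zero.2 ⟨n, hn, h⟩)

lemma zsF_app {g : G} (hg : ¬ IsOfFinAddOrder g) (a b c d : ℤ) :
    zsF g a b c d (-((2 : ℤ) • g)) = a ∧ zsF g a b c d (-g) = b ∧ zsF g a b c d g = c ∧
      zsF g a b c d ((2 : ℤ) • g) = d := by
  classical
  have key : ∀ m n : ℤ, m • g = n • g → m = n := fun m n h => by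
    have := zs_ne hg (m - n) (by rw [sub_smul, h, sub_self])
    omega
  have e1 : -((2 : ℤ) • g) = (-2 : ℤ) • g := by rw [neg_smul]
  have e2 : -g = (-1 : ℤ) • g := by simp
  have e3 : ∀ m n : ℤ, (m • g = n • g) = (m = n) :=
    fun m n => propext ⟨key m n, fun h => by rw [h]⟩
  have e4 : zsF g a b c d = Finsupp.single ((-2 : ℤ) • g) a + Finsupp.single ((-1 : ℤ) • g) b +
      Finsupp.single ((1 : ℤ) • g) c + Finsupp.single ((2 : ℤ) • g) d := by
    rw [zsF, e1, e2, one_smul]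
  have e5 : zsF g a b c d g = zsF g a b c d ((1 : ℤ) • g) := by rw [one_smul]
  rw [e5, e1, e2, e4]
  simp only [Finsupp.add_apply, Finsupp.single_apply, e3]
  norm_num

lemma zsF_sum (g : G) (a b c d : ℤ) :
    (zsF g a b c d).sum (fun x n => n • x) = (2 * d + c - 2 * a - b) • g := by
  have hz : ∀ x : G, (0 : ℤ) • x = 0 := fun x => zero_smul ℤ x
  have ha : ∀ (x : G) (m n : ℤ), (m + n) • x = m • x + n • x := fun x m n => add_smul m n x
  rw [zsF, Finsupp.sum_add_index' hz ha, Finsupp.sum_add_index' hz ha,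
    Finsupp.sum_add_index' hz ha]
  have hs : ∀ (x : G) (n : ℤ), (Finsupp.single x n).sum (fun x n => n • x) = n • x :=
    fun x n => Finsupp.sum_single_index (hz x)
  simp only [hs]
  module

lemma zsF_mem {g : G} (a b c d : ℤ) (ha : 0 ≤ a) (hb : 0 ≤ b)
    (hc : 0 ≤ c) (hd : 0 ≤ d) (h : 2 * d + c = 2 * a + b) :
    zsF g a b c d ∈ zeroSumMonoid ({-((2 : ℤ) • g), -g, g, (2 : ℤ) • g} : Set G) := by
  classical
  rw [zs_mem]
  refine ⟨fun x => ?_, fun x hx => ?_, ?_⟩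
  · simp only [zsF, Finsupp.add_apply, Finsupp.single_apply]
    split_ifs <;> omega
  · by_contra hn
    simp only [Set.mem_insert_iff, Set.mem_singleton_iff, not_or] at hn
    obtain ⟨h1, h2, h3, h4⟩ := hn
    apply hx
    simp [zsF, Finsupp.single_apply, Ne.symm h1, Ne.symm h2, Ne.symm h3, Ne.symm h4]
  · rw [zsF_sum, show 2 * d + c - 2 * a - b = 0 by omega, zero_smul]

lemma zs_eqF {g : G} (hg : ¬ IsOfFinAddOrder g) {f : G →₀ ℤ}
    (hf : f ∈ zeroSumMonoid ({-((2 : ℤ) • g), -g, g, (2 : ℤ) • g} : Set G)) :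
    ∃ a b c d : ℤ, 0 ≤ a ∧ 0 ≤ b ∧ 0 ≤ c ∧ 0 ≤ d ∧ 2 * d + c = 2 * a + b ∧
      f = zsF g a b c d := by
  have hf' := zs_mem.1 hf
  have he : f = zsF g (f (-((2 : ℤ) • g))) (f (-g)) (f g) (f ((2 : ℤ) • g)) := by
    obtain ⟨k1, k2, k3, k4⟩ :=
      zsF_app hg (f (-((2 : ℤ) • g))) (f (-g)) (f g) (f ((2 : ℤ) • g))
    ext x
    by_cases hx : x ∈ ({-((2 : ℤ) • g), -g, g, (2 : ℤ) • g} : Set G)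
    · rcases hx with rfl | rfl | rfl | rfl
      · exact k1.symm
      · exact k2.symm
      · exact k3.symm
      · exact k4.symm
    · have h0 : f x = 0 := by by_contra h'; exact hx (hf'.2.1 x h')
      rw [h0]
      classical
      simp only [Set.mem_insert_iff, Set.mem_singleton_iff, not_or] at hx
      obtain ⟨h1, h2, h3, h4⟩ := hx
      simp [zsF, Finsupp.single_apply, Ne.symm h1, Ne.symm h2, Ne.symm h3, Ne.symm h4]
  refine ⟨_, _, _, _, hf'.1 _, hf'.1 _, hf'.1 _, hf'.1 _, ?_, he⟩
  have hs := hf'.2.2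
  rw [he, zsF_sum] at hs
  have := zs_ne hg _ hs
  omega

lemma zsF_add (g : G) (a b c d a' b' c' d' : ℤ) :
    zsF g a b c d + zsF g a' b' c' d' = zsF g (a + a') (b + b') (c + c') (d + d') := by
  simp only [zsF, Finsupp.single_add]
  abel

lemma zsF_nsmul (g : G) (n : ℕ) (a b c d : ℤ) :
    n • zsF g a b c d = zsF g (n * a) (n * b) (n * c) (n * d) := by
  simp [zsF, Finsupp.smul_single]

lemma zs_fg {g : G} (hg : ¬ IsOfFinAddOrder g) :
    (zeroSumMonoid ({-((2 : ℤ) • g), -g, g, (2 : ℤ) • g} : Set G)).FG := by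
  classical
  refine ⟨{zsF g 1 0 0 1, zsF g 0 1 1 0, zsF g 1 0 2 0, zsF g 0 2 0 1}, le_antisymm ?_ ?_⟩
  · rw [AddSubmonoid.closure_le]
    intro x hx
    simp only [Finset.coe_insert, Finset.coe_singleton, Set.mem_insert_iff,
      Set.mem_singleton_iff] at hx
    rcases hx with rfl | rfl | rfl | rfl <;> apply zsF_mem <;> norm_num
  · intro f hf
    obtain ⟨a, b, c, d, ha, hb, hc, hd, h, rfl⟩ := zs_eqF hg hf
    set T : Set (G →₀ ℤ) := ↑({zsF g 1 0 0 1, zsF g 0 1 1 0, zsF g 1 0 2 0, zsF g 0 2 0 1} :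
      Finset (G →₀ ℤ)) with hT
    have m1 : zsF g 1 0 0 1 ∈ AddSubmonoid.closure T := AddSubmonoid.subset_closure (by simp [hT])
    have m2 : zsF g 0 1 1 0 ∈ AddSubmonoid.closure T := AddSubmonoid.subset_closure (by simp [hT])
    have m3 : zsF g 1 0 2 0 ∈ AddSubmonoid.closure T := AddSubmonoid.subset_closure (by simp [hT])
    have m4 : zsF g 0 2 0 1 ∈ AddSubmonoid.closure T := AddSubmonoid.subset_closure (by simp [hT])
    lift a to ℕ using ha
    lift b to ℕ using hb
    lift c to ℕ using hc
    lift d to ℕ using hd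
    rcases le_total a d with had | had
    · have e : zsF g a b c d = a • zsF g 1 0 0 1 + (d - a) • zsF g 0 2 0 1 + c • zsF g 0 1 1 0 := by
        simp only [zsF_nsmul, zsF_add]
        congr 1 <;> push_cast [had] <;> linarith
      rw [e]
      exact add_mem (add_mem (AddSubmonoid.nsmul_mem _ m1 _) (AddSubmonoid.nsmul_mem _ m4 _))
        (AddSubmonoid.nsmul_mem _ m2 _)
    · have e : zsF g a b c d = d • zsF g 1 0 0 1 + (a - d) • zsF g 1 0 2 0 + b • zsF g 0 1 1 0 := by
        simp only [zsF_nsmul, zsF_add]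
        congr 1 <;> push_cast [had] <;> linarith
      rw [e]
      exact add_mem (add_mem (AddSubmonoid.nsmul_mem _ m1 _) (AddSubmonoid.nsmul_mem _ m3 _))
        (AddSubmonoid.nsmul_mem _ m2 _)

lemma zsF_inj {g : G} (hg : ¬ IsOfFinAddOrder g) {a b c d a' b' c' d' : ℤ}
    (h : zsF g a b c d = zsF g a' b' c' d') : a = a' ∧ b = b' ∧ c = c' ∧ d = d' := by
  obtain ⟨k1, k2, k3, k4⟩ := zsF_app hg a b c d
  obtain ⟨l1, l2, l3, l4⟩ := zsF_app hg a' b' c' d'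
  rw [h] at k1 k2 k3 k4
  exact ⟨k1.symm.trans l1, k2.symm.trans l2, k3.symm.trans l3, k4.symm.trans l4⟩

lemma zs_nf {g : G} (hg : ¬ IsOfFinAddOrder g) :
    ¬ IsMonoidFactorial (zeroSumMonoid ({-((2 : ℤ) • g), -g, g, (2 : ℤ) • g} : Set G)) := by
  intro H
  have mu : zsF g 1 0 0 1 ∈ zeroSumMonoid ({-((2 : ℤ) • g), -g, g, (2 : ℤ) • g} : Set G) := by
    apply zsF_mem <;> norm_num
  have mv : zsF g 0 1 1 0 ∈ zeroSumMonoid ({-((2 : ℤ) • g), -g, g, (2 : ℤ) • g} : Set G) := by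
    apply zsF_mem <;> norm_num
  have mw : zsF g 1 0 2 0 ∈ zeroSumMonoid ({-((2 : ℤ) • g), -g, g, (2 : ℤ) • g} : Set G) := by
    apply zsF_mem <;> norm_num
  have mz : zsF g 0 2 0 1 ∈ zeroSumMonoid ({-((2 : ℤ) • g), -g, g, (2 : ℤ) • g} : Set G) := by
    apply zsF_mem <;> norm_num
  have z0 : zsF g 0 0 0 0 = 0 := by simp [zsF]
  have u0 : zsF g 1 0 0 1 ≠ 0 := by
    rw [← z0]
    intro h
    have := zsF_inj hg h
    omega
  obtain ⟨l, hl, hs⟩ := H _ mu (fun h => u0 (zs_reduced _ mu h))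
  have hl0 : l ≠ 0 := by
    rintro rfl
    exact u0 (by simpa using hs.symm)
  obtain ⟨p, hp⟩ := Multiset.exists_mem_of_ne_zero hl0
  obtain ⟨l', rfl⟩ := Multiset.exists_cons_of_mem hp
  have hpp := hl p hp
  have hr : l'.sum ∈ zeroSumMonoid ({-((2 : ℤ) • g), -g, g, (2 : ℤ) • g} : Set G) :=
    AddSubmonoid.multiset_sum_mem _ _ fun q hq => (hl q (Multiset.mem_cons_of_mem hq)).1
  rw [Multiset.sum_cons] at hs
  obtain ⟨hpS, hpn, hpd⟩ := hpp
  have hpu : p = zsF g 1 0 0 1 := by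
    obtain ⟨a, b, c, d, ha, hb, hc, hd, h, rfl⟩ := zs_eqF hg hpS
    obtain ⟨a', b', c', d', ha', hb', hc', hd', h', e⟩ := zs_eqF hg hr
    rw [e, zsF_add] at hs
    have hi := zsF_inj hg hs
    have ha1 : a ≠ 0 := by
      intro h0
      have e1 : b = 0 := by omega
      have e2 : c = 0 := by omega
      have e3 : d = 0 := by omega
      apply hpn
      rw [h0, e1, e2, e3, z0, neg_zero]
      exact zero_mem _
    have e0 : a = 1 := by omega
    have e1 : b = 0 := by omega
    have e2 : c = 0 := by omega
    have e3 : d = 1 := by omega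
    rw [e0, e1, e2, e3]
  subst hpu
  rcases hpd _ mw _ mz ⟨2 • zsF g 0 1 1 0, AddSubmonoid.nsmul_mem _ mv 2, by
    simp only [zsF_nsmul, zsF_add]; norm_num⟩ with ⟨s, hs', e⟩ | ⟨s, hs', e⟩
  all_goals
    obtain ⟨a, b, c, d, ha, hb, hc, hd, h, rfl⟩ := zs_eqF hg hs'
    rw [zsF_add] at e
    have := zsF_inj hg e
    omega

end helpers

/-- **Counterexample setup.** Let `G` be an abelian group, `g ∈ G` of infinite order, and
`G₀ = {-2g, -g, g, 2g}`. Then the monoid `B(G₀)` of zero-sum sequences over `G₀` is a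
finitely generated, reduced, torsion-free Krull monoid that is not factorial, and its
height-one prime ideals are exactly the sets `p_i = {T ∈ B(G₀) : i ∈ supp T}`, `i ∈ G₀`. -/
theorem zero_sum_monoid_properties {G : Type*} [AddCommGroup G] (g : G)
    (hg : ¬ IsOfFinAddOrder g) :
    (zeroSumMonoid ({-((2 : ℤ) • g), -g, g, (2 : ℤ) • g} : Set G)).FG ∧
    (∀ f : G →₀ ℤ, f ∈ zeroSumMonoid ({-((2 : ℤ) • g), -g, g, (2 : ℤ) • g} : Set G) →
      -f ∈ zeroSumMonoid ({-((2 : ℤ) • g), -g, g, (2 : ℤ) • g} : Set G) → f = 0) ∧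
    (∀ n : ℕ, n ≠ 0 → ∀ f ∈ zeroSumMonoid ({-((2 : ℤ) • g), -g, g, (2 : ℤ) • g} : Set G),
      ∀ f' ∈ zeroSumMonoid ({-((2 : ℤ) • g), -g, g, (2 : ℤ) • g} : Set G),
      n • f = n • f' → f = f') ∧
    IsKrullMonoid (zeroSumMonoid ({-((2 : ℤ) • g), -g, g, (2 : ℤ) • g} : Set G)) ∧
    ¬ IsMonoidFactorial (zeroSumMonoid ({-((2 : ℤ) • g), -g, g, (2 : ℤ) • g} : Set G)) ∧
    {P : Set (G →₀ ℤ) |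
        IsMonoidHeightOnePrime (zeroSumMonoid ({-((2 : ℤ) • g), -g, g, (2 : ℤ) • g} : Set G)) P} =
      {P : Set (G →₀ ℤ) | ∃ i ∈ ({-((2 : ℤ) • g), -g, g, (2 : ℤ) • g} : Set G),
        P = {f : G →₀ ℤ |
          f ∈ zeroSumMonoid ({-((2 : ℤ) • g), -g, g, (2 : ℤ) • g} : Set G) ∧ f i ≠ 0}} := by
  refine ⟨zs_fg hg, fun f hf hf' => zs_reduced f hf hf', ?_, zs_krull (Set.toFinite _),
    zs_nf hg, zs_height (Set.toFinite _) ?_ ?_⟩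
  · intro n hn f _ f' _ h
    ext x
    have := DFunLike.congr_fun h x
    simp only [Finsupp.smul_apply, nsmul_eq_mul] at this
    exact mul_left_cancel₀ (by exact_mod_cast hn) this
  · intro i hi
    obtain ⟨k1, k2, k3, k4⟩ := zsF_app hg 1 1 1 1
    refine ⟨zsF g 1 1 1 1, by apply zsF_mem <;> norm_num, ?_⟩
    rcases hi with rfl | rfl | rfl | rfl <;> omega
  · intro i hi
    rcases hi with rfl | rfl | rfl | rfl
    · obtain ⟨k1, k2, k3, k4⟩ := zsF_app hg 0 3 1 1
      refine ⟨zsF g 0 3 1 1, by apply zsF_mem <;> norm_num, k1, ?_⟩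
      intro j hj hji
      rcases hj with rfl | rfl | rfl | rfl <;> first | exact absurd rfl hji | omega
    · obtain ⟨k1, k2, k3, k4⟩ := zsF_app hg 2 0 2 1
      refine ⟨zsF g 2 0 2 1, by apply zsF_mem <;> norm_num, k2, ?_⟩
      intro j hj hji
      rcases hj with rfl | rfl | h | rfl
      on_goal 3 => rw [h]
      all_goals first | exact absurd rfl hji | omega
    · obtain ⟨k1, k2, k3, k4⟩ := zsF_app hg 1 2 0 2
      refine ⟨zsF i 1 2 0 2, by apply zsF_mem <;> norm_num, k3, ?_⟩
      intro j hj hji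
      rcases hj with rfl | rfl | h | rfl
      on_goal 3 => exact absurd h hji
      all_goals first | exact absurd rfl hji | omega
    · obtain ⟨k1, k2, k3, k4⟩ := zsF_app hg 1 1 3 0
      refine ⟨zsF g 1 1 3 0, by apply zsF_mem <;> norm_num, k4, ?_⟩
      intro j hj hji
      rcases hj with rfl | rfl | h | rfl
      on_goal 3 => rw [h]
      all_goals first | exact absurd rfl hji | omega

end
end

section
/- Let G be an abelian group, g ∈ G an element of infinite order, G_0 = {-2g,-g,g,2g}, and B(G_0) the Krull monoid of zero-sum sequences over G_0 with height-one prime ideals p_i = {T ∈ B(G_0) : i ∈ supp(T)} for i ∈ G_0. Let α_1 = (-2g)·(-2g)·(2g)·(2g)·(-g)·(-g)·g·g ∈ B(G_0) and α_2 = α_1·α_1. Then for every a ∈ B(G_0) and every i ∈ G_0, the element α_2 + a - α_1 of the quotient group of B(G_0) has p_i-adic valuation at least 2. In particular, there is no a ∈ B(G_0) such that α_2 + a - α_1 has p_i-adic valuation at most 1 for some i ∈ G_0 (contradicting Lemma 7 of Chang). -/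
open scoped nonZeroDivisors

noncomputable section

/-- **Counterexample to Chang's Lemma 7.** Let `G` be an abelian group, `g ∈ G` of infinite
order, `G₀ = {-2g, -g, g, 2g}`, `B(G₀)` the Krull monoid of zero-sum sequences over `G₀`
with height-one primes `p_i = {T ∈ B(G₀) : i ∈ supp T}` for `i ∈ G₀`. Let
`α₁ = (-2g)(-2g)(2g)(2g)(-g)(-g)(g)(g)` and `α₂ = α₁·α₁`. Then for every `a ∈ B(G₀)` and
every `i ∈ G₀`, the element `α₂ + a - α₁` of the quotient group of `B(G₀)` has `p_i`-adic
valuation at least `2`; in particular there is no `a ∈ B(G₀)` such that `α₂ + a - α₁` has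
`p_i`-adic valuation at most `1` for some `i ∈ G₀`. -/
theorem counterexample_to_chang {G : Type*} [AddCommGroup G] (g : G)
    (hg : ¬ IsOfFinAddOrder g)
    (G₀ : Set G) (hG₀ : G₀ = {-((2 : ℤ) • g), -g, g, (2 : ℤ) • g})
    (α₁ α₂ : G →₀ ℤ)
    (hα₁ : α₁ = Finsupp.single (-((2 : ℤ) • g)) 2 + Finsupp.single ((2 : ℤ) • g) 2 +
      Finsupp.single (-g) 2 + Finsupp.single g 2)
    (hα₂ : α₂ = α₁ + α₁) :
    (∀ a ∈ zeroSumMonoid G₀, ∀ i ∈ G₀,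
      mvalGeTwo (zeroSumMonoid G₀) {t : G →₀ ℤ | t ∈ zeroSumMonoid G₀ ∧ t i ≠ 0}
        (α₂ + a - α₁)) ∧
    ¬ ∃ a ∈ zeroSumMonoid G₀, ∃ i ∈ G₀,
      ¬ mvalGeTwo (zeroSumMonoid G₀) {t : G →₀ ℤ | t ∈ zeroSumMonoid G₀ ∧ t i ≠ 0}
        (α₂ + a - α₁) := by
  have key : ∀ a ∈ zeroSumMonoid G₀, ∀ i ∈ G₀,
      mvalGeTwo (zeroSumMonoid G₀) {t : G →₀ ℤ | t ∈ zeroSumMonoid G₀ ∧ t i ≠ 0}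
        (α₂ + a - α₁) := by
    classical
    intro a ha i hi
    obtain ⟨β, hβ⟩ : ∃ β : G →₀ ℤ, β = Finsupp.single (-((2 : ℤ) • g)) 1 +
      Finsupp.single ((2 : ℤ) • g) 1 + Finsupp.single (-g) 1 + Finsupp.single g 1 := ⟨_, rfl⟩
    have h2 : α₁ = β + β := by
      have e : ∀ x : G, Finsupp.single x (2 : ℤ) = Finsupp.single x 1 + Finsupp.single x 1 := by
        intro x
        rw [← Finsupp.single_add]
        norm_num
      rw [hα₁, hβ, e, e, e, e]
      abel
    have hs : ∀ x y : G, 0 ≤ (Finsupp.single x (1 : ℤ)) y := by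
      intro x y
      rw [Finsupp.single_apply]
      split_ifs <;> norm_num
    have happ : ∀ x, β x = Finsupp.single (-((2 : ℤ) • g)) (1 : ℤ) x +
      Finsupp.single ((2 : ℤ) • g) (1 : ℤ) x + Finsupp.single (-g) (1 : ℤ) x +
      Finsupp.single g (1 : ℤ) x := by
      intro x
      rw [hβ]
      rfl
    have hβS : β ∈ zeroSumMonoid G₀ := by
      refine ⟨?_, ?_, ?_⟩
      · intro x
        rw [happ]
        have h1 := hs (-((2 : ℤ) • g)) x
        have h2 := hs ((2 : ℤ) • g) x
        have h3 := hs (-g) x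
        have h4 := hs g x
        linarith
      · intro x hx
        rw [Finsupp.mem_support_iff] at hx
        by_contra hn
        apply hx
        rw [hG₀] at hn
        simp only [Set.mem_insert_iff, Set.mem_singleton_iff, not_or] at hn
        obtain ⟨n1, n2, n3, n4⟩ := hn
        rw [happ, Finsupp.single_eq_of_ne n1, Finsupp.single_eq_of_ne n2,
          Finsupp.single_eq_of_ne n3, Finsupp.single_eq_of_ne n4]
        norm_num
      · have z : ∀ x : G, (0 : ℤ) • x = 0 := fun x => zero_smul ℤ x
        have ad : ∀ (x : G) (m n : ℤ), (m + n) • x = m • x + n • x := fun x m n => add_smul m n x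
        rw [hβ, Finsupp.sum_add_index' z ad, Finsupp.sum_add_index' z ad,
          Finsupp.sum_add_index' z ad]
        have e : ∀ x : G, (Finsupp.single x (1 : ℤ)).sum (fun x n => n • x) = x := by
          intro x
          rw [Finsupp.sum_single_index]
          · exact one_smul ℤ x
          · exact z x
        rw [e, e, e, e]
        abel
    have hβi : β i ≠ 0 := by
      have h1 := hs (-((2 : ℤ) • g)) i
      have h2 := hs ((2 : ℤ) • g) i
      have h3 := hs (-g) i
      have h4 := hs g i
      rw [happ]
      rw [hG₀] at hi
      simp only [Set.mem_insert_iff, Set.mem_singleton_iff] at hi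
      have h5 : ∀ x, i = x → Finsupp.single x (1 : ℤ) i = 1 := by
        rintro x rfl
        exact Finsupp.single_eq_same
      rcases hi with h | h | h | h <;> have := h5 _ h <;> linarith
    have hloc : ∀ b ∈ zeroSumMonoid G₀, b ∈ monLoc (zeroSumMonoid G₀)
        {t : G →₀ ℤ | t ∈ zeroSumMonoid G₀ ∧ t i ≠ 0} := by
      intro b hb
      exact ⟨b, hb, 0, zero_mem _, fun h => h.2 rfl, (sub_zero b).symm⟩
    refine ⟨β, ⟨β, ⟨hβS, hβi⟩, 0, hloc 0 (zero_mem _), (add_zero β).symm⟩,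
      β + a, ⟨β, ⟨hβS, hβi⟩, a, hloc a ha, rfl⟩, ?_⟩
    rw [hα₂, h2]
    abel
  refine ⟨key, ?_⟩
  rintro ⟨a, ha, i, hi, h⟩
  exact h (key a ha i hi)

end
end
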